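/- Let D be a non-square integer and k ≥ 1. Fix ε = (ε₁,…,ε_k) with each ε_i ∈ {1,-1}. Then #{n ≤ x : n squarefree with exactly k prime factors p₁ < … < p_k, and (D/p_i) = ε_i for each i} ~ (1/2^k)·π_k(x) as x → ∞, where π_k(x) counts squarefree n ≤ x with k prime factors. -/

import Mathlib

open Filter Asymptotics
open scoped Classical

/-!
The Wiener–Ikehara theorem, proved by averaging against Fejér kernels, gives the prime number
theorem in residue classes. As `D` is not a square, some odd `b` has `(D/b) = -1`, and
multiplication by `b` exchanges the unit classes modulo `4|D|` on which `(D/·)` is `1` and `-1`: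
each sign is taken by half of the primes.

Landau's induction then counts products of `k` increasing primes subject to conditions of densities
`c₀, …, cₖ₋₁`. Split off the largest prime: `n = m q`. For `m` below a small power of `x`, the
density of the admissible `q` contributes `cₖ₋₁ (x / log x) ∑ 1 / m`; the other `m` are negligible
because `∑ 1 / m`, taken over products of `k - 1` primes below `x`, is asymptotic to
`c₀ ⋯ cₖ₋₂ (log log x) ^ (k - 1) / (k - 1)!`, which does not change when `x` is replaced by a power.
The conditions thus affect the count only through `∏ cᵢ`, which is `2⁻ᵏ` here and `1` for `π_k`.
-/

section

open MeasureTheory Set Topology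

/-! ### Fejér averages of bounded functions -/

/-- The Fejér kernel `(sin (u / 2) / (u / 2)) ^ 2`, normalised to take the value `1` at `0`. Up to
a constant it is the Fourier transform of the tent function `t ↦ max (1 - |t|) 0`, so that
convolving with it only tests the values of a Laplace transform on a bounded vertical segment. -/
noncomputable def fejerKernel (u : ℝ) : ℝ := Real.sinc (u / 2) ^ 2

lemma fejerKernel_zero : fejerKernel 0 = 1 := by simp [fejerKernel]

lemma continuous_fejerKernel : Continuous fejerKernel := by
  unfold fejerKernel
  fun_prop

lemma fejerKernel_nonneg (u : ℝ) : 0 ≤ fejerKernel u := sq_nonneg _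

lemma fejerKernel_le_one (u : ℝ) : fejerKernel u ≤ 1 :=
  (sq_le_one_iff_abs_le_one _).2 (Real.abs_sinc_le_one _)

lemma fejerKernel_mul_sq (u : ℝ) : fejerKernel u * u ^ 2 = 2 * (1 - Real.cos u) := by
  rcases eq_or_ne u 0 with rfl | hu
  · simp
  · have hsin := Real.sin_sq_eq_half_sub (u / 2)
    rw [mul_div_cancel₀ u two_ne_zero] at hsin
    rw [fejerKernel, Real.sinc_of_ne_zero (by positivity), div_pow, hsin]
    field_simp

lemma fejerKernel_le (u : ℝ) : fejerKernel u ≤ 5 * (1 + u ^ 2)⁻¹ := by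
  rw [← div_eq_mul_inv, le_div_iff₀ (by positivity), mul_add, fejerKernel_mul_sq]
  linarith [fejerKernel_le_one u, Real.neg_one_le_cos u]

lemma integrable_fejerKernel : Integrable fejerKernel := by
  refine (integrable_inv_one_add_sq.const_mul 5).mono'
    continuous_fejerKernel.aestronglyMeasurable (.of_forall fun u ↦ ?_)
  rw [Real.norm_of_nonneg (fejerKernel_nonneg u)]
  exact fejerKernel_le u

lemma integral_fejerKernel_pos : 0 < ∫ u, fejerKernel u := by
  rw [integral_pos_iff_support_of_nonneg fejerKernel_nonneg integrable_fejerKernel]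
  exact continuous_fejerKernel.isOpen_support.measure_pos volume ⟨0, by simp [fejerKernel_zero]⟩

lemma integral_one_sub_mul_cos (u : ℝ) :
    ∫ t in (0 : ℝ)..1, 2 * ((1 - t) * Real.cos (t * u)) = fejerKernel u := by
  rcases eq_or_ne u 0 with rfl | hu
  · simp only [mul_zero, Real.cos_zero, mul_one, fejerKernel_zero,
      intervalIntegral.integral_const_mul]
    rw [intervalIntegral.integral_sub (by simp) (by simp)]
    norm_num
  have hderiv (t : ℝ) :
      HasDerivAt (fun t ↦ 2 * ((1 - t) * Real.sin (t * u) / u - Real.cos (t * u) / u ^ 2))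
        (2 * ((1 - t) * Real.cos (t * u))) t := by
    have hlin : HasDerivAt (fun t : ℝ ↦ t * u) u t := by simpa using (hasDerivAt_id t).mul_const u
    have hsub : HasDerivAt (fun t : ℝ ↦ 1 - t) (-1) t := by
      simpa using (hasDerivAt_id t).const_sub 1
    convert! (((hsub.mul hlin.sin).div_const u).sub
      (hlin.cos.div_const (u ^ 2))).const_mul 2 using 1
    field_simp
    ring
  rw [intervalIntegral.integral_eq_sub_of_hasDerivAt (fun t _ ↦ hderiv t)
    (Continuous.intervalIntegrable (by fun_prop) _ _),
    ← mul_div_cancel_right₀ (fejerKernel u) (pow_ne_zero 2 hu), fejerKernel_mul_sq]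
  simp only [sub_self, zero_mul, zero_div, one_mul, sub_zero, Real.sin_zero, Real.cos_zero,
    mul_zero]
  ring

lemma fejerKernel_eq_integral (u : ℝ) :
    (fejerKernel u : ℂ) =
      ∫ t in (-1 : ℝ)..1, ((1 - |t| : ℝ) : ℂ) * Complex.exp (t * u * Complex.I) := by
  set F : ℝ → ℂ := fun t ↦ ((1 - |t| : ℝ) : ℂ) * Complex.exp (t * u * Complex.I) with hF
  have hcont : Continuous F := by fun_prop
  have hneg : ∫ t in (-1 : ℝ)..0, F t = ∫ t in (0 : ℝ)..1, F (-t) := by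
    rw [intervalIntegral.integral_comp_neg F, neg_zero]
  have hsum : ∀ t ∈ uIcc (0 : ℝ) 1,
      F (-t) + F t = ((2 * ((1 - t) * Real.cos (t * u)) : ℝ) : ℂ) := by
    intro t ht
    rw [uIcc_of_le zero_le_one] at ht
    simp only [hF, abs_neg, abs_of_nonneg ht.1]
    push_cast
    rw [Complex.cos]
    ring_nf
  rw [← intervalIntegral.integral_add_adjacent_intervals (b := 0) (hcont.intervalIntegrable _ _)
    (hcont.intervalIntegrable _ _), hneg, ← intervalIntegral.integral_add
    (Continuous.intervalIntegrable (by fun_prop) _ _) (hcont.intervalIntegrable _ _),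
    intervalIntegral.integral_congr hsum, intervalIntegral.integral_ofReal,
    integral_one_sub_mul_cos]

section
variable {b : ℝ → ℝ} {B : ℝ} {G : ℂ → ℂ}

lemma integrable_fejerKernel_mul_sub {l : ℝ} (hl : l ≠ 0) (y : ℝ) :
    Integrable fun v ↦ fejerKernel (l * (y - v)) :=
  (integrable_fejerKernel.comp_mul_left' hl).comp_sub_left y

lemma norm_one_sub_abs_mul_exp_le {t : ℝ} (ht : t ∈ Ioc (-1 : ℝ) 1) (u : ℝ) :
    ‖((1 - |t| : ℝ) : ℂ) * Complex.exp (t * u * Complex.I)‖ ≤ 1 := by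
  have habs : |t| ≤ 1 := abs_le.2 ⟨ht.1.le, ht.2⟩
  rw [norm_mul, ← Complex.ofReal_mul, Complex.norm_exp_ofReal_mul_I, mul_one, Complex.norm_real,
    Real.norm_of_nonneg (by linarith)]
  linarith [abs_nonneg t]

lemma integral_mul_exp_mul_fejerKernel (hb : Measurable b) (hB : ∀ v, |b v| ≤ B)
    (hG : ∀ s : ℂ, 0 < s.re → ∫ v in Ioi (0 : ℝ), (b v : ℂ) * Complex.exp (-s * v) = G s)
    (l y : ℝ) {δ : ℝ} (hδ : 0 < δ) :
    ∫ v in Ioi (0 : ℝ), (b v : ℂ) * Complex.exp (-δ * v) * fejerKernel (l * (y - v)) =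
      ∫ t in Ioc (-1 : ℝ) 1, ((1 - |t| : ℝ) : ℂ) * Complex.exp (t * (l * y : ℝ) * Complex.I) *
        G (δ + l * t * Complex.I) := by
  have hB0 : 0 ≤ B := (abs_nonneg _).trans (hB 0)
  have hint : Integrable (Function.uncurry fun v t : ℝ ↦ (b v : ℂ) * Complex.exp (-δ * v) *
      (((1 - |t| : ℝ) : ℂ) * Complex.exp (t * (l * (y - v) : ℝ) * Complex.I)))
      ((volume.restrict (Ioi 0)).prod (volume.restrict (Ioc (-1) 1))) := by
    have hdom : Integrable (fun v : ℝ ↦ B * Real.exp (-δ * v)) (volume.restrict (Ioi 0)) :=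
      (integrableOn_exp_mul_Ioi (neg_lt_zero.2 hδ) 0).const_mul B
    have hone : Integrable (fun _ : ℝ ↦ (1 : ℝ)) (volume.restrict (Ioc (-1 : ℝ) 1)) := by simp
    refine (hdom.mul_prod hone).mono' (Measurable.aestronglyMeasurable (by fun_prop)) ?_
    rw [Measure.prod_restrict]
    filter_upwards [ae_restrict_mem (measurableSet_Ioi.prod measurableSet_Ioc)] with ⟨v, t⟩ hz
    have hexp : ‖Complex.exp (-δ * v)‖ = Real.exp (-δ * v) := by simp [Complex.norm_exp]
    have hbv : ‖(b v : ℂ)‖ ≤ B := by simpa using hB v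
    rw [Function.uncurry_apply_pair, norm_mul, norm_mul, hexp]
    gcongr
    exact norm_one_sub_abs_mul_exp_le hz.2 _
  simp_rw [fejerKernel_eq_integral, intervalIntegral.integral_of_le (neg_le_self zero_le_one),
    ← integral_const_mul]
  rw [integral_integral_swap hint]
  congr with t
  rw [← hG _ (by simpa using hδ), ← integral_const_mul]
  congr with v
  have hexp : Complex.exp (-δ * v) * Complex.exp (t * (l * (y - v) : ℝ) * Complex.I) =
      Complex.exp (t * (l * y : ℝ) * Complex.I) *
        Complex.exp (-(δ + l * t * Complex.I) * v) := by
    rw [← Complex.exp_add, ← Complex.exp_add]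
    push_cast
    ring_nf
  linear_combination (b v : ℂ) * ((1 - |t| : ℝ) : ℂ) * hexp

lemma tendsto_integral_mul_exp_mul_fejerKernel (hb : Measurable b) (hB : ∀ v, |b v| ≤ B)
    {l : ℝ} (hl : l ≠ 0) (y : ℝ) :
    Tendsto (fun δ : ℝ ↦ ∫ v in Ioi (0 : ℝ),
        (b v : ℂ) * Complex.exp (-δ * v) * fejerKernel (l * (y - v)))
      (𝓝[>] 0) (𝓝 (∫ v in Ioi (0 : ℝ), (b v : ℂ) * fejerKernel (l * (y - v)))) := by
  have hB0 : 0 ≤ B := (abs_nonneg _).trans (hB 0)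
  have hK := continuous_fejerKernel.measurable
  refine tendsto_integral_filter_of_dominated_convergence (fun v ↦ B * fejerKernel (l * (y - v)))
    (.of_forall fun δ ↦ Measurable.aestronglyMeasurable (by fun_prop)) ?_
    ((integrable_fejerKernel_mul_sub hl y).const_mul B).restrict (.of_forall fun v ↦ ?_)
  · filter_upwards [self_mem_nhdsWithin] with δ hδ
    filter_upwards [ae_restrict_mem measurableSet_Ioi] with v hv
    have hexp : ‖Complex.exp (-δ * v)‖ ≤ 1 := by
      simpa [Complex.norm_exp] using mul_nonneg (le_of_lt hδ) (le_of_lt hv)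
    have hbv : ‖(b v : ℂ)‖ ≤ B := by simpa using hB v
    rw [norm_mul, norm_mul, Complex.norm_real (fejerKernel _),
      Real.norm_of_nonneg (fejerKernel_nonneg _)]
    gcongr
    · exact fejerKernel_nonneg _
    · simpa using mul_le_mul hbv hexp (norm_nonneg _) hB0
  · have hcont : Continuous fun δ : ℝ ↦
        (b v : ℂ) * Complex.exp (-δ * v) * fejerKernel (l * (y - v)) := by fun_prop
    simpa using (hcont.tendsto 0).mono_left nhdsWithin_le_nhds

lemma tendsto_integral_one_sub_abs_mul_exp_mul (hGc : ContinuousOn G {s | 0 ≤ s.re}) (l u : ℝ) :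
    Tendsto (fun δ : ℝ ↦ ∫ t in Ioc (-1 : ℝ) 1,
        ((1 - |t| : ℝ) : ℂ) * Complex.exp (t * u * Complex.I) * G (δ + l * t * Complex.I))
      (𝓝[>] 0) (𝓝 (∫ t in Ioc (-1 : ℝ) 1,
        ((1 - |t| : ℝ) : ℂ) * Complex.exp (t * u * Complex.I) * G (l * t * Complex.I))) := by
  have hmem : ∀ᶠ δ : ℝ in 𝓝[>] 0, δ ∈ Ioc (0 : ℝ) 1 := Ioc_mem_nhdsGT one_pos
  have hF : ContinuousOn (fun p : ℝ × ℝ ↦ G (p.1 + l * p.2 * Complex.I))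
      (Icc 0 1 ×ˢ Icc (-1) 1) :=
    hGc.comp (by fun_prop) fun p hp ↦ by simpa using hp.1.1
  obtain ⟨M, hM⟩ := (isCompact_Icc.prod isCompact_Icc).exists_bound_of_continuousOn hF
  refine tendsto_integral_filter_of_dominated_convergence (fun _ ↦ M) ?_ ?_ (by simp) ?_
  · filter_upwards [hmem] with δ hδ
    have hGδ : ContinuousOn (fun t : ℝ ↦ G (δ + l * t * Complex.I)) (Ioc (-1) 1) :=
      hGc.comp (by fun_prop) fun t _ ↦ by simpa using hδ.1.le
    exact ((Continuous.continuousOn (by fun_prop)).mul hGδ).aestronglyMeasurable measurableSet_Ioc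
  · filter_upwards [hmem] with δ hδ
    filter_upwards [ae_restrict_mem measurableSet_Ioc] with t ht
    have hGM := hM (δ, t) ⟨Ioc_subset_Icc_self hδ, Ioc_subset_Icc_self ht⟩
    rw [norm_mul]
    simpa using mul_le_mul (norm_one_sub_abs_mul_exp_le ht u) hGM (norm_nonneg _) zero_le_one
  · filter_upwards with t
    refine Tendsto.const_mul _ ?_
    have hGt : ContinuousOn (fun δ : ℝ ↦ G (δ + l * t * Complex.I)) (Ici 0) :=
      hGc.comp (by fun_prop) fun δ hδ ↦ by simpa using hδ
    simpa using (hGt 0 self_mem_Ici).tendsto.mono_left (nhdsWithin_mono 0 Ioi_subset_Ici_self)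

lemma integral_mul_fejerKernel (hb : Measurable b) (hB : ∀ v, |b v| ≤ B)
    (hGc : ContinuousOn G {s | 0 ≤ s.re})
    (hG : ∀ s : ℂ, 0 < s.re → ∫ v in Ioi (0 : ℝ), (b v : ℂ) * Complex.exp (-s * v) = G s)
    {l : ℝ} (hl : l ≠ 0) (y : ℝ) :
    ∫ v in Ioi (0 : ℝ), (b v : ℂ) * fejerKernel (l * (y - v)) =
      ∫ t in Ioc (-1 : ℝ) 1, ((1 - |t| : ℝ) : ℂ) * Complex.exp (t * (l * y : ℝ) * Complex.I) *
        G (l * t * Complex.I) := by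
  refine tendsto_nhds_unique (tendsto_integral_mul_exp_mul_fejerKernel hb hB hl y)
    ((tendsto_integral_one_sub_abs_mul_exp_mul hGc l (l * y)).congr' ?_)
  filter_upwards [self_mem_nhdsWithin] with δ hδ
  exact (integral_mul_exp_mul_fejerKernel hb hB hG l y hδ).symm

lemma tendsto_integral_exp_mul_atTop_zero (f : ℝ → ℂ) :
    Tendsto (fun u : ℝ ↦ ∫ t : ℝ, Complex.exp (t * u * Complex.I) * f t) atTop (𝓝 0) := by
  have hscale : Tendsto (fun u : ℝ ↦ -(u / (2 * Real.pi))) atTop (cocompact ℝ) :=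
    (tendsto_neg_atTop_atBot.comp (tendsto_id.atTop_div_const Real.two_pi_pos)).mono_right
      atBot_le_cocompact
  refine ((Real.tendsto_integral_exp_smul_cocompact f).comp hscale).congr fun u ↦ ?_
  refine integral_congr_ae (.of_forall fun t ↦ ?_)
  simp only
  rw [Circle.smul_def, Real.fourierChar_apply, smul_eq_mul,
    show 2 * Real.pi * -(t * -(u / (2 * Real.pi))) = t * u by field_simp, Complex.ofReal_mul]

theorem tendsto_integral_mul_fejerKernel_atTop (hb : Measurable b) (hB : ∀ v, |b v| ≤ B)
    (hGc : ContinuousOn G {s | 0 ≤ s.re})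
    (hG : ∀ s : ℂ, 0 < s.re → ∫ v in Ioi (0 : ℝ), (b v : ℂ) * Complex.exp (-s * v) = G s)
    {l : ℝ} (hl : 0 < l) :
    Tendsto (fun y ↦ ∫ v in Ioi (0 : ℝ), b v * fejerKernel (l * (y - v))) atTop (𝓝 0) := by
  have hcomplex : Tendsto (fun y : ℝ ↦ ∫ v in Ioi (0 : ℝ), (b v : ℂ) * fejerKernel (l * (y - v)))
      atTop (𝓝 0) := by
    simp_rw [integral_mul_fejerKernel hb hB hGc hG hl.ne']
    have hRL := tendsto_integral_exp_mul_atTop_zero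
      ((Ioc (-1 : ℝ) 1).indicator fun t ↦ ((1 - |t| : ℝ) : ℂ) * G (l * t * Complex.I))
    refine (hRL.comp (tendsto_id.const_mul_atTop hl)).congr fun y ↦ ?_
    rw [← integral_indicator measurableSet_Ioc]
    refine integral_congr_ae (.of_forall fun t ↦ ?_)
    simp only [indicator, id]
    split_ifs <;> ring
  rw [← tendsto_ofReal_iff]
  refine hcomplex.congr fun y ↦ ?_
  simp_rw [← Complex.ofReal_mul, integral_complex_ofReal]

end

/-! ### A Tauberian theorem for Dirichlet series -/

section
variable {K a : ℝ → ℝ} {C c : ℝ}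

lemma measurable_of_monotone_mul_exp (ha : Monotone fun v ↦ a v * Real.exp v) : Measurable a := by
  simpa [Pi.div_def] using ha.measurable.div Real.measurable_exp

lemma le_mul_exp_of_monotone_mul_exp (ha : Monotone fun v ↦ a v * Real.exp v) {v w h : ℝ}
    (hw : 0 ≤ a w) (hvw : v ≤ w) (hwh : w ≤ v + h) : a v ≤ a w * Real.exp h := by
  refine le_of_mul_le_mul_right ?_ (Real.exp_pos v)
  calc a v * Real.exp v ≤ a w * Real.exp w := ha hvw
    _ ≤ a w * Real.exp (v + h) := by gcongr
    _ = a w * Real.exp h * Real.exp v := by rw [Real.exp_add]; ring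

lemma integrable_comp_sub_div_mul (hK : Integrable K) (ha : Measurable a) (haC : ∀ v, |a v| ≤ C)
    (l y : ℝ) : Integrable fun u ↦ a (y - u / l) * K u :=
  hK.bdd_mul (ha.comp (by fun_prop)).aestronglyMeasurable (.of_forall fun _ ↦ haC _)

lemma abs_div_sq_le_inv {R u : ℝ} (hu : u ∈ Icc (-R) R) : |u / R ^ 2| ≤ R⁻¹ := by
  rw [abs_div, abs_of_nonneg (sq_nonneg R)]
  calc |u| / R ^ 2 ≤ R / R ^ 2 := by gcongr; exact abs_le.2 hu
    _ = R⁻¹ := by rw [sq, div_self_mul_self']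

lemma integral_comp_sub_le (hK : Integrable K) (hK0 : ∀ u, 0 ≤ K u)
    (ha : Monotone fun v ↦ a v * Real.exp v) (ha0 : ∀ v, 0 ≤ a v) (haC : ∀ v, a v ≤ C) (R y : ℝ) :
    ∫ u, a (y - R⁻¹ - u / R ^ 2) * K u ≤
      a y * Real.exp (2 * R⁻¹) * (∫ u, K u) + C * ∫ u in (Icc (-R) R)ᶜ, K u := by
  have hC := (hK.const_mul C).indicator (measurableSet_Icc (a := -R) (b := R)).compl
  rw [← integral_const_mul, ← integral_const_mul, ← integral_indicator measurableSet_Icc.compl,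
    ← integral_add (hK.const_mul _) hC]
  refine integral_mono (integrable_comp_sub_div_mul hK (measurable_of_monotone_mul_exp ha)
    (fun v ↦ (abs_of_nonneg (ha0 v)).trans_le (haC v)) _ _) ((hK.const_mul _).add hC) fun u ↦ ?_
  have hmain : 0 ≤ a y * Real.exp (2 * R⁻¹) * K u :=
    mul_nonneg (mul_nonneg (ha0 y) (Real.exp_pos _).le) (hK0 u)
  simp only
  by_cases hu : u ∈ Icc (-R) R
  · have huR := abs_le.1 (abs_div_sq_le_inv hu)
    rw [indicator_of_notMem (notMem_compl_iff.2 hu), add_zero]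
    exact mul_le_mul_of_nonneg_right (le_mul_exp_of_monotone_mul_exp ha (ha0 y) (by linarith)
      (by linarith)) (hK0 u)
  · rw [indicator_of_mem hu]
    linarith [mul_le_mul_of_nonneg_right (haC (y - R⁻¹ - u / R ^ 2)) (hK0 u)]

lemma mul_exp_mul_setIntegral_le (hK : Integrable K) (hK0 : ∀ u, 0 ≤ K u)
    (ha : Monotone fun v ↦ a v * Real.exp v) (ha0 : ∀ v, 0 ≤ a v) (haC : ∀ v, a v ≤ C) (R y : ℝ) :
    a y * Real.exp (-(2 * R⁻¹)) * ∫ u in Icc (-R) R, K u ≤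
      ∫ u, a (y + R⁻¹ - u / R ^ 2) * K u := by
  rw [← integral_const_mul, ← integral_indicator measurableSet_Icc]
  refine integral_mono ((hK.const_mul _).indicator measurableSet_Icc)
    (integrable_comp_sub_div_mul hK (measurable_of_monotone_mul_exp ha)
      (fun v ↦ (abs_of_nonneg (ha0 v)).trans_le (haC v)) _ _) fun u ↦ ?_
  by_cases hu : u ∈ Icc (-R) R
  · have huR := abs_le.1 (abs_div_sq_le_inv hu)
    rw [indicator_of_mem hu]
    refine mul_le_mul_of_nonneg_right ?_ (hK0 u)
    rw [Real.exp_neg, ← div_eq_mul_inv, div_le_iff₀ (Real.exp_pos _)]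
    exact le_mul_exp_of_monotone_mul_exp ha (ha0 _) (by linarith) (by linarith)
  · rw [indicator_of_notMem hu]
    exact mul_nonneg (ha0 _) (hK0 u)

lemma tendsto_setIntegral_Icc_neg (hK : Integrable K) :
    Tendsto (fun R ↦ ∫ u in Icc (-R) R, K u) atTop (𝓝 (∫ u, K u)) :=
  (aecover_Icc tendsto_neg_atTop_atBot tendsto_id).integral_tendsto_of_countably_generated hK

lemma tendsto_exp_const_mul_inv_atTop (r : ℝ) :
    Tendsto (fun R : ℝ ↦ Real.exp (r * R⁻¹)) atTop (𝓝 1) := by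
  have hinv : Tendsto (fun R : ℝ ↦ r * R⁻¹) atTop (𝓝 0) := by
    simpa using tendsto_inv_atTop_zero.const_mul r
  simpa [Function.comp_def] using (Real.continuous_exp.tendsto 0).comp hinv

lemma eventually_lt_of_tendsto_integral_comp (hK : Integrable K) (hK0 : ∀ u, 0 ≤ K u)
    (hKpos : 0 < ∫ u, K u) (ha : Monotone fun v ↦ a v * Real.exp v) (ha0 : ∀ v, 0 ≤ a v)
    (haC : ∀ v, a v ≤ C) (hlim : ∀ l > 0,
      Tendsto (fun y ↦ ∫ u, a (y - u / l) * K u) atTop (𝓝 (c * ∫ u, K u))) {m : ℝ} (hm : m < c) :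
    ∀ᶠ y in atTop, m < a y := by
  have hR : Tendsto (fun R ↦ c * (∫ u, K u) - C * ∫ u in (Icc (-R) R)ᶜ, K u) atTop
      (𝓝 (c * ∫ u, K u)) := by
    have hcompl := ((tendsto_setIntegral_Icc_neg hK).const_sub (∫ u, K u)).const_mul C
    simpa [setIntegral_compl measurableSet_Icc hK] using hcompl.const_sub (c * ∫ u, K u)
  have hexp : Tendsto (fun R : ℝ ↦ m * Real.exp (2 * R⁻¹) * ∫ u, K u) atTop
      (𝓝 (m * ∫ u, K u)) := by
    simpa using ((tendsto_exp_const_mul_inv_atTop 2).const_mul m).mul_const (∫ u, K u)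
  obtain ⟨R, hRlt, hRpos⟩ := ((hexp.eventually_lt hR (mul_lt_mul_of_pos_right hm hKpos)).and
    (eventually_gt_atTop 0)).exists
  have hy := (((hlim (R ^ 2) (by positivity)).comp
    (tendsto_atTop_add_const_right _ (-R⁻¹) tendsto_id)).sub_const
      (C * ∫ u in (Icc (-R) R)ᶜ, K u)).eventually_const_lt hRlt
  filter_upwards [hy] with y hy
  have hle := integral_comp_sub_le hK hK0 ha ha0 haC R y
  have hlt : m * (Real.exp (2 * R⁻¹) * ∫ u, K u) < a y * (Real.exp (2 * R⁻¹) * ∫ u, K u) := by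
    simp only [Function.comp_apply, id, ← sub_eq_add_neg] at hy
    linarith
  exact lt_of_mul_lt_mul_right hlt (by positivity)

lemma eventually_gt_of_tendsto_integral_comp (hK : Integrable K) (hK0 : ∀ u, 0 ≤ K u)
    (hKpos : 0 < ∫ u, K u) (ha : Monotone fun v ↦ a v * Real.exp v) (ha0 : ∀ v, 0 ≤ a v)
    (haC : ∀ v, a v ≤ C) (hlim : ∀ l > 0,
      Tendsto (fun y ↦ ∫ u, a (y - u / l) * K u) atTop (𝓝 (c * ∫ u, K u))) {m : ℝ} (hm : c < m) :
    ∀ᶠ y in atTop, a y < m := by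
  have hR : Tendsto (fun R : ℝ ↦ m * Real.exp (-2 * R⁻¹) * ∫ u in Icc (-R) R, K u) atTop
      (𝓝 (m * ∫ u, K u)) := by
    simpa using ((tendsto_exp_const_mul_inv_atTop (-2)).const_mul m).mul
      (tendsto_setIntegral_Icc_neg hK)
  obtain ⟨R, hRlt, hRpos⟩ := ((hR.eventually_const_lt (mul_lt_mul_of_pos_right hm hKpos)).and
    (eventually_gt_atTop 0)).exists
  filter_upwards [((hlim (R ^ 2) (by positivity)).comp
    (tendsto_atTop_add_const_right _ R⁻¹ tendsto_id)).eventually_lt_const hRlt] with y hy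
  have hle := mul_exp_mul_setIntegral_le hK hK0 ha ha0 haC R y
  have hlt : a y * (Real.exp (-(2 * R⁻¹)) * ∫ u in Icc (-R) R, K u) <
      m * (Real.exp (-(2 * R⁻¹)) * ∫ u in Icc (-R) R, K u) := by
    simp only [Function.comp_apply, id, neg_mul] at hy
    linarith
  exact lt_of_mul_lt_mul_right hlt
    (mul_nonneg (Real.exp_pos _).le (integral_nonneg fun u ↦ hK0 u))

theorem tendsto_of_tendsto_integral_comp (hK : Integrable K) (hK0 : ∀ u, 0 ≤ K u)
    (hKpos : 0 < ∫ u, K u) (ha : Monotone fun v ↦ a v * Real.exp v) (ha0 : ∀ v, 0 ≤ a v)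
    (haC : ∀ v, a v ≤ C) (hlim : ∀ l > 0,
      Tendsto (fun y ↦ ∫ u, a (y - u / l) * K u) atTop (𝓝 (c * ∫ u, K u))) :
    Tendsto a atTop (𝓝 c) :=
  tendsto_order.2
    ⟨fun _ hm ↦ eventually_lt_of_tendsto_integral_comp hK hK0 hKpos ha ha0 haC hlim hm,
      fun _ hm ↦ eventually_gt_of_tendsto_integral_comp hK hK0 hKpos ha ha0 haC hlim hm⟩

end

section
variable {K a : ℝ → ℝ} {C c l : ℝ}

lemma mul_integral_mul_comp_mul_sub (F K : ℝ → ℝ) (hl : 0 < l) (y : ℝ) :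
    l * ∫ v, F v * K (l * (y - v)) = ∫ u, F (y - u / l) * K u := by
  have hF (v : ℝ) : F v * K (l * (y - v)) = (fun u ↦ F (y - u / l) * K u) (l * (y - v)) := by
    simp only [mul_div_cancel_left₀ _ hl.ne', sub_sub_cancel]
  simp_rw [hF]
  rw [integral_sub_left_eq_self (fun w ↦ (fun u ↦ F (y - u / l) * K u) (l * w)),
    Measure.integral_comp_mul_left (fun u ↦ F (y - u / l) * K u), abs_of_pos (inv_pos.2 hl),
    smul_eq_mul, mul_inv_cancel_left₀ hl.ne']

lemma integrable_indicator_comp_sub_div_mul (hK : Integrable K) (l y : ℝ) :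
    Integrable fun u ↦ (Ici (0 : ℝ)).indicator (1 : ℝ → ℝ) (y - u / l) * K u :=
  integrable_comp_sub_div_mul (C := 1) hK (measurable_one.indicator measurableSet_Ici)
    (fun v ↦ (norm_indicator_le_norm_self (1 : ℝ → ℝ) v).trans (by simp)) l y

lemma tendsto_integral_indicator_comp_sub_div_mul (hK : Integrable K) (l : ℝ) :
    Tendsto (fun y ↦ ∫ u, (Ici (0 : ℝ)).indicator (1 : ℝ → ℝ) (y - u / l) * K u) atTop
      (𝓝 (∫ u, K u)) := by
  refine tendsto_integral_filter_of_dominated_convergence (fun u ↦ ‖K u‖)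
    (.of_forall fun y ↦ (integrable_indicator_comp_sub_div_mul hK l y).aestronglyMeasurable)
    (.of_forall fun y ↦ .of_forall fun u ↦ ?_) hK.norm (.of_forall fun u ↦ ?_)
  · rw [norm_mul]
    exact mul_le_of_le_one_left (norm_nonneg _)
      ((norm_indicator_le_norm_self _ _).trans (by simp))
  · refine tendsto_const_nhds.congr' ?_
    filter_upwards [eventually_ge_atTop (u / l)] with y hy
    rw [indicator_of_mem (mem_Ici.2 (sub_nonneg.2 hy)), Pi.one_apply, one_mul]

lemma tendsto_integral_comp_of_tendsto_integral_sub (hK : Integrable K) (ha : Measurable a)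
    (haC : ∀ v, |a v| ≤ C) (ha0 : ∀ v < 0, a v = 0) (hl : 0 < l)
    (hlim : Tendsto (fun y ↦ ∫ v in Ioi (0 : ℝ), (a v - c) * K (l * (y - v))) atTop (𝓝 0)) :
    Tendsto (fun y ↦ ∫ u, a (y - u / l) * K u) atTop (𝓝 (c * ∫ u, K u)) := by
  have hadd := (hlim.const_mul l).add
    ((tendsto_integral_indicator_comp_sub_div_mul hK l).const_mul c)
  rw [mul_zero, zero_add] at hadd
  refine hadd.congr fun y ↦ ?_
  have hind : ∫ v in Ioi (0 : ℝ), (a v - c) * K (l * (y - v)) =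
      ∫ v, (a v - c * (Ici (0 : ℝ)).indicator (1 : ℝ → ℝ) v) * K (l * (y - v)) := by
    rw [← integral_Ici_eq_integral_Ioi, ← integral_indicator measurableSet_Ici]
    congr with v
    by_cases hv : v ∈ Ici (0 : ℝ)
    · simp [hv]
    · simp [hv, ha0 v (not_le.1 hv)]
  rw [hind,
    mul_integral_mul_comp_mul_sub (fun v ↦ a v - c * (Ici 0).indicator (1 : ℝ → ℝ) v) K hl]
  simp_rw [sub_mul, mul_assoc c]
  rw [integral_sub (integrable_comp_sub_div_mul hK ha haC l y)
    ((integrable_indicator_comp_sub_div_mul hK l y).const_mul c), integral_const_mul,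
    sub_add_cancel]

end

section
variable {f : ℕ → ℝ} {C c : ℝ}

/-- The normalised summatory function of `f` on a logarithmic scale, `e⁻ᵛ ∑ f k` over `k ≤ eᵛ`,
whose Laplace transform is read off the Dirichlet series of `f`. -/
noncomputable def expSummatory (f : ℕ → ℝ) (v : ℝ) : ℝ :=
  (∑ k ∈ Finset.Icc 1 ⌊Real.exp v⌋₊, f k) * Real.exp (-v)

lemma expSummatory_mul_exp (f : ℕ → ℝ) (v : ℝ) :
    expSummatory f v * Real.exp v = ∑ k ∈ Finset.Icc 1 ⌊Real.exp v⌋₊, f k := by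
  rw [expSummatory, mul_assoc, ← Real.exp_add, neg_add_cancel, Real.exp_zero, mul_one]

lemma expSummatory_log_natCast (f : ℕ → ℝ) {n : ℕ} (hn : 0 < n) :
    expSummatory f (Real.log n) = (∑ k ∈ Finset.Icc 1 n, f k) / n := by
  rw [expSummatory, Real.exp_neg, Real.exp_log (Nat.cast_pos.2 hn), Nat.floor_natCast,
    div_eq_mul_inv]

lemma expSummatory_of_neg (f : ℕ → ℝ) {v : ℝ} (hv : v < 0) : expSummatory f v = 0 := by
  rw [expSummatory, Nat.floor_eq_zero.2 (Real.exp_lt_one_iff.2 hv)]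
  simp

lemma expSummatory_nonneg (hf : ∀ n, 0 ≤ f n) (v : ℝ) : 0 ≤ expSummatory f v :=
  mul_nonneg (Finset.sum_nonneg fun k _ ↦ hf k) (Real.exp_pos _).le

lemma expSummatory_le (hf : ∀ n, 0 ≤ f n) (hC : ∀ n : ℕ, ∑ k ∈ Finset.Icc 1 n, f k ≤ C * n)
    (v : ℝ) : expSummatory f v ≤ C := by
  have hC0 : 0 ≤ C := (hf 1).trans (by simpa using hC 1)
  refine le_of_mul_le_mul_right ?_ (Real.exp_pos v)
  rw [expSummatory_mul_exp]
  exact (hC _).trans (by gcongr; exact Nat.floor_le (Real.exp_pos v).le)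

lemma monotone_expSummatory_mul_exp (hf : ∀ n, 0 ≤ f n) :
    Monotone fun v ↦ expSummatory f v * Real.exp v := by
  intro v w hvw
  simp only [expSummatory_mul_exp]
  exact Finset.sum_le_sum_of_subset_of_nonneg
    (Finset.Icc_subset_Icc_right (Nat.floor_mono (Real.exp_le_exp.2 hvw))) fun k _ _ ↦ hf k

lemma integral_Ioi_one_eq_integral_exp (g : ℝ → ℂ) :
    ∫ t in Ioi (1 : ℝ), g t = ∫ v in Ioi (0 : ℝ), Real.exp v • g (Real.exp v) := by
  have himage : Real.exp '' Ioi 0 = Ioi 1 := by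
    simp
  rw [← himage, integral_image_eq_integral_abs_deriv_smul measurableSet_Ioi
    (fun v _ ↦ (Real.hasDerivAt_exp v).hasDerivWithinAt) Real.exp_injective.injOn]
  simp only [Real.abs_exp]

lemma add_one_ne_zero_of_re_nonneg {s : ℂ} (hs : 0 ≤ s.re) : s + 1 ≠ 0 := by
  intro h
  have hre : s.re + 1 = 0 := by simpa using congrArg Complex.re h
  linarith

lemma integral_expSummatory_mul_exp (hf : ∀ n, 0 ≤ f n)
    (hC : ∀ n : ℕ, ∑ k ∈ Finset.Icc 1 n, f k ≤ C * n) {s : ℂ} (hs : 0 < s.re) :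
    ∫ v in Ioi (0 : ℝ), (expSummatory f v : ℂ) * Complex.exp (-s * v) =
      LSeries (fun n ↦ (f n : ℂ)) (s + 1) / (s + 1) := by
  have hO : (fun n : ℕ ↦ ∑ k ∈ Finset.Icc 1 n, f k) =O[atTop] fun n ↦ (n : ℝ) ^ (1 : ℝ) := by
    refine .of_bound C (.of_forall fun n ↦ ?_)
    rw [Real.norm_of_nonneg (Finset.sum_nonneg fun k _ ↦ hf k)]
    simpa using hC n
  rw [LSeries_eq_mul_integral_of_nonneg f zero_le_one (s := s + 1) (by simpa using hs) hO hf,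
    mul_div_cancel_left₀ _ (add_one_ne_zero_of_re_nonneg hs.le), integral_Ioi_one_eq_integral_exp]
  refine integral_congr_ae (.of_forall fun v ↦ ?_)
  have hcpow : (Real.exp v : ℂ) ^ (-(s + 1 + 1)) = Complex.exp (-(s + 1 + 1) * v) := by
    rw [Complex.cpow_def_of_ne_zero (mod_cast (Real.exp_pos v).ne'),
      ← Complex.ofReal_log (Real.exp_pos v).le, Real.log_exp, mul_comm]
  have hexp : Complex.exp (-v) * Complex.exp (-s * v) =
      Complex.exp v * Complex.exp (-(s + 1 + 1) * v) := by
    rw [← Complex.exp_add, ← Complex.exp_add]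
    ring_nf
  simp only [expSummatory, Complex.real_smul, hcpow]
  push_cast
  linear_combination (∑ k ∈ Finset.Icc 1 ⌊Real.exp v⌋₊, (f k : ℂ)) * hexp

lemma integral_expSummatory_sub_mul_exp (hf : ∀ n, 0 ≤ f n)
    (hC : ∀ n : ℕ, ∑ k ∈ Finset.Icc 1 n, f k ≤ C * n) (c : ℝ) {s : ℂ} (hs : 0 < s.re) :
    ∫ v in Ioi (0 : ℝ), ((expSummatory f v - c : ℝ) : ℂ) * Complex.exp (-s * v) =
      (LSeries (fun n ↦ (f n : ℂ)) (s + 1) - c / s - c) / (s + 1) := by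
  have hs0 : s ≠ 0 := by rintro rfl; simp at hs
  have hs1 := add_one_ne_zero_of_re_nonneg hs.le
  have hneg : (-s).re < 0 := by simpa using hs
  have hexp := integrableOn_exp_mul_complex_Ioi hneg 0
  have hmul : IntegrableOn (fun v : ℝ ↦ (expSummatory f v : ℂ) * Complex.exp (-s * v))
      (Ioi 0) := by
    refine Integrable.bdd_mul (c := C) hexp (Complex.measurable_ofReal.comp
      (measurable_of_monotone_mul_exp (monotone_expSummatory_mul_exp hf))).aestronglyMeasurable
      (.of_forall fun v ↦ ?_)
    rw [Complex.norm_real, Real.norm_of_nonneg (expSummatory_nonneg hf v)]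
    exact expSummatory_le hf hC v
  simp_rw [Complex.ofReal_sub, sub_mul]
  rw [integral_sub hmul (hexp.const_mul _), integral_expSummatory_mul_exp hf hC hs,
    integral_const_mul, integral_exp_mul_complex_Ioi hneg]
  simp only [Complex.ofReal_zero, mul_zero, Complex.exp_zero]
  field_simp
  ring

/-- The **Wiener–Ikehara theorem**. -/
theorem tendsto_sum_div_of_LSeries_sub_continuousOn (hf : ∀ n, 0 ≤ f n)
    (hC : ∀ n : ℕ, ∑ k ∈ Finset.Icc 1 n, f k ≤ C * n) {H : ℂ → ℂ}
    (hH : ContinuousOn H {s | 1 ≤ s.re})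
    (hE : ∀ s : ℂ, 1 < s.re → LSeries (fun n ↦ (f n : ℂ)) s - c / (s - 1) = H s) :
    Tendsto (fun n : ℕ ↦ (∑ k ∈ Finset.Icc 1 n, f k) / n) atTop (𝓝 c) := by
  have hmono := monotone_expSummatory_mul_exp hf
  have hmeas := measurable_of_monotone_mul_exp hmono
  have habs (v : ℝ) : |expSummatory f v| ≤ C :=
    (abs_of_nonneg (expSummatory_nonneg hf v)).trans_le (expSummatory_le hf hC v)
  have hGc : ContinuousOn (fun s ↦ (H (s + 1) - c) / (s + 1)) {s | 0 ≤ s.re} :=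
    ((hH.comp (by fun_prop) fun s hs ↦ by simpa using hs).sub continuousOn_const).div
      (by fun_prop) fun s hs ↦ add_one_ne_zero_of_re_nonneg hs
  have hG (s : ℂ) (hs : 0 < s.re) :
      ∫ v in Ioi (0 : ℝ), ((expSummatory f v - c : ℝ) : ℂ) * Complex.exp (-s * v) =
        (H (s + 1) - c) / (s + 1) := by
    rw [integral_expSummatory_sub_mul_exp hf hC c hs, ← hE (s + 1) (by simpa using hs),
      add_sub_cancel_right]
  have hlim : Tendsto (expSummatory f) atTop (𝓝 c) :=
    tendsto_of_tendsto_integral_comp integrable_fejerKernel fejerKernel_nonneg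
      integral_fejerKernel_pos hmono (expSummatory_nonneg hf) (expSummatory_le hf hC) fun l hl ↦
        tendsto_integral_comp_of_tendsto_integral_sub integrable_fejerKernel hmeas habs
          (fun v hv ↦ expSummatory_of_neg f hv) hl
          (tendsto_integral_mul_fejerKernel_atTop (B := C + |c|) (hmeas.sub_const c)
            (fun v ↦ (abs_sub _ _).trans (by gcongr; exact habs v)) hGc hG hl)
  refine (hlim.comp (Real.tendsto_log_atTop.comp tendsto_natCast_atTop_atTop)).congr' ?_
  filter_upwards [eventually_gt_atTop 0] with n hn
  exact expSummatory_log_natCast f hn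

end

open ArithmeticFunction ArithmeticFunction.vonMangoldt in
theorem tendsto_sum_residueClass_div {q : ℕ} [NeZero q] {a : ZMod q} (ha : IsUnit a) :
    Tendsto (fun n : ℕ ↦ (∑ k ∈ Finset.Icc 1 n, residueClass a k) / n) atTop
      (𝓝 (q.totient : ℝ)⁻¹) := by
  refine tendsto_sum_div_of_LSeries_sub_continuousOn (C := Real.log 4 + 4)
    (residueClass_nonneg a) (fun n ↦ ?_) (continuousOn_LFunctionResidueClassAux a) fun s hs ↦ ?_
  · refine le_trans ?_ (Chebyshev.psi_le_const_mul_self (Nat.cast_nonneg n))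
    rw [Chebyshev.psi, Nat.floor_natCast]
    exact Finset.sum_le_sum fun k _ ↦ residueClass_le a k
  · rw [eqOn_LFunctionResidueClassAux ha hs]
    push_cast
    rfl

/-! ### Sets of primes with a density -/

section
variable {S : Set ℕ} {c t z η : ℝ}

/-- The number of positive integers `n ≤ t` lying in `S`. -/
noncomputable def countUpTo (S : Set ℕ) (t : ℝ) : ℝ := {n ∈ Finset.Icc 1 ⌊t⌋₊ | n ∈ S}.card

/-- The Chebyshev function of `S`: the sum of `log n` over the positive integers `n ≤ t` in `S`. -/
noncomputable def chebyshevSum (S : Set ℕ) (t : ℝ) : ℝ :=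
  ∑ n ∈ Finset.Icc 1 ⌊t⌋₊ with n ∈ S, Real.log n

/-- `S` has density `c` on the scale of the primes: its counting function is `c t / log t` up to
`o(t / log t)`. The value `c = 0` is allowed. -/
def HasPrimeDensity (S : Set ℕ) (c : ℝ) : Prop :=
  Tendsto (fun t ↦ countUpTo S t * Real.log t / t) atTop (𝓝 c)

lemma countUpTo_nonneg (S : Set ℕ) (t : ℝ) : 0 ≤ countUpTo S t := Nat.cast_nonneg _

lemma countUpTo_le (S : Set ℕ) (ht : 0 ≤ t) : countUpTo S t ≤ t :=
  calc countUpTo S t ≤ (Finset.Icc 1 ⌊t⌋₊).card := Nat.cast_le.2 (Finset.card_filter_le _ _)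
    _ = ⌊t⌋₊ := by rw [Nat.card_Icc, Nat.add_sub_cancel]
    _ ≤ t := Nat.floor_le ht

lemma chebyshevSum_le_countUpTo_mul_log (S : Set ℕ) (ht : 0 ≤ t) :
    chebyshevSum S t ≤ countUpTo S t * Real.log t := by
  rw [chebyshevSum, countUpTo, ← nsmul_eq_mul]
  refine Finset.sum_le_card_nsmul _ _ _ fun n hn ↦ ?_
  obtain ⟨hn1, hnt⟩ := Finset.mem_Icc.1 (Finset.mem_filter.1 hn).1
  exact Real.log_le_log (by exact_mod_cast hn1) ((Nat.le_floor_iff ht).1 hnt)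

lemma countUpTo_mul_log_le (S : Set ℕ) (t : ℝ) (hz : 1 ≤ z) :
    countUpTo S t * Real.log z ≤ z * Real.log z + chebyshevSum S t := by
  have hlogz := Real.log_nonneg hz
  have hterm : ∀ n ∈ {n ∈ Finset.Icc 1 ⌊t⌋₊ | n ∈ S},
      Real.log z ≤ (if (n : ℝ) ≤ z then Real.log z else 0) + Real.log n := by
    intro n _
    split_ifs with h
    · linarith [Real.log_natCast_nonneg n]
    · rw [zero_add]
      exact Real.log_le_log (by linarith) (not_le.1 h).le
  have hsmall :
      (({n ∈ Finset.Icc 1 ⌊t⌋₊ | n ∈ S}.filter fun n : ℕ ↦ (n : ℝ) ≤ z).card : ℝ) ≤ z := by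
    refine le_trans ?_ (countUpTo_le S (by linarith))
    refine Nat.cast_le.2 (Finset.card_le_card fun n hn ↦ ?_)
    simp only [Finset.mem_filter, Finset.mem_Icc] at hn ⊢
    exact ⟨⟨hn.1.1.1, Nat.le_floor hn.2⟩, hn.1.2⟩
  calc countUpTo S t * Real.log z
      = ∑ _n ∈ Finset.Icc 1 ⌊t⌋₊ with _n ∈ S, Real.log z := by
        rw [Finset.sum_const, nsmul_eq_mul, countUpTo]
    _ ≤ ∑ n ∈ Finset.Icc 1 ⌊t⌋₊ with n ∈ S,
          ((if (n : ℝ) ≤ z then Real.log z else 0) + Real.log n) := Finset.sum_le_sum hterm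
    _ ≤ z * Real.log z + chebyshevSum S t := by
        rw [Finset.sum_add_distrib, ← Finset.sum_filter, Finset.sum_const, nsmul_eq_mul]
        exact add_le_add (mul_le_mul_of_nonneg_right hsmall hlogz) le_rfl

lemma countUpTo_mul_log_div_le (S : Set ℕ) (hη : η < 1) (ht : 1 < t) :
    countUpTo S t * Real.log t / t ≤
      Real.log t / t ^ η + chebyshevSum S t / t / (1 - η) := by
  have ht0 : 0 < t := by linarith
  have hη0 : 0 < 1 - η := by linarith
  have hle := countUpTo_mul_log_le S t (Real.one_le_rpow ht.le hη0.le)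
  rw [Real.log_rpow ht0, Real.rpow_sub ht0, Real.rpow_one] at hle
  have hdiv := div_le_div_of_nonneg_right hle (mul_pos hη0 ht0).le
  calc _ = countUpTo S t * ((1 - η) * Real.log t) / ((1 - η) * t) := by field_simp
    _ ≤ _ := hdiv
    _ = _ := by field_simp

lemma tendsto_comp_floor_div {g : ℕ → ℝ} (h : Tendsto (fun n : ℕ ↦ g n / n) atTop (𝓝 c)) :
    Tendsto (fun t : ℝ ↦ g ⌊t⌋₊ / t) atTop (𝓝 c) := by
  have hmul := (h.comp (tendsto_nat_floor_atTop (α := ℝ))).mul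
    (tendsto_nat_floor_div_atTop (R := ℝ))
  rw [mul_one] at hmul
  refine hmul.congr' ?_
  filter_upwards [eventually_ge_atTop 1] with t ht
  have hfloor : (0 : ℝ) < ⌊t⌋₊ := Nat.cast_pos.2 (Nat.floor_pos.2 ht)
  rw [Function.comp_apply, div_mul_div_cancel₀ hfloor.ne']

theorem hasPrimeDensity_of_tendsto_chebyshevSum_div
    (h : Tendsto (fun n : ℕ ↦ chebyshevSum S n / n) atTop (𝓝 c)) : HasPrimeDensity S c := by
  have hθ : Tendsto (fun t ↦ chebyshevSum S t / t) atTop (𝓝 c) := by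
    simpa only [chebyshevSum, Nat.floor_natCast] using tendsto_comp_floor_div h
  refine tendsto_order.2 ⟨fun m hm ↦ ?_, fun m hm ↦ ?_⟩
  · filter_upwards [hθ.eventually_const_lt hm, eventually_ge_atTop 0] with t hmt ht
    exact hmt.trans_le (by gcongr; exact chebyshevSum_le_countUpTo_mul_log S ht)
  · have hη : Tendsto (fun η : ℝ ↦ 0 + c / (1 - η)) (𝓝[>] 0) (𝓝 c) := by
      have hcont : ContinuousAt (fun η : ℝ ↦ 0 + c / (1 - η)) 0 := by
        fun_prop (disch := norm_num)
      simpa using hcont.tendsto.mono_left nhdsWithin_le_nhds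
    obtain ⟨η, hηm, hη0, hη1⟩ :=
      ((hη.eventually_lt_const hm).and (Ioo_mem_nhdsGT one_pos)).exists
    have hbound : Tendsto (fun t : ℝ ↦ Real.log t / t ^ η + chebyshevSum S t / t / (1 - η)) atTop
        (𝓝 (0 + c / (1 - η))) :=
      (isLittleO_log_rpow_atTop hη0).tendsto_div_nhds_zero.add (hθ.div_const _)
    filter_upwards [hbound.eventually_lt_const hηm, eventually_gt_atTop 1] with t htm ht
    exact (countUpTo_mul_log_div_le S hη1 ht).trans_lt htm

lemma countUpTo_sub_countUpTo_eq {T : Set ℕ} {K : ℕ} (h : ∀ n > K, n ∈ S ↔ n ∈ T) (ht : K ≤ t) :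
    countUpTo S t - countUpTo T t = countUpTo S K - countUpTo T K := by
  simp only [countUpTo, Finset.card_filter, Nat.cast_sum, ← Finset.sum_sub_distrib,
    Nat.floor_natCast]
  symm
  refine Finset.sum_subset (Finset.Icc_subset_Icc_right (Nat.le_floor ht)) fun n hn hnK ↦ ?_
  have hK : n > K := by simp only [Finset.mem_Icc] at hn hnK; lia
  simp only [h n hK, sub_self]

lemma HasPrimeDensity.congr {T : Set ℕ} {K : ℕ} (hS : HasPrimeDensity S c)
    (h : ∀ n > K, n ∈ S ↔ n ∈ T) : HasPrimeDensity T c := by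
  have hlog : Tendsto (fun t ↦ (countUpTo S K - countUpTo T K) * (Real.log t / t)) atTop
      (𝓝 ((countUpTo S K - countUpTo T K) * 0)) :=
    (Real.isLittleO_log_id_atTop.tendsto_div_nhds_zero).const_mul _
  refine (hS.sub hlog).congr' ?_ |>.trans_eq (by rw [mul_zero, sub_zero])
  filter_upwards [eventually_ge_atTop (K : ℝ)] with t ht
  rw [← countUpTo_sub_countUpTo_eq h ht]
  ring

end

section
variable {q : ℕ}
open ArithmeticFunction.vonMangoldt

lemma sum_residueClass_sub_chebyshevSum (a : ZMod q) (n : ℕ) :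
    ∑ k ∈ Finset.Icc 1 n, residueClass a k - chebyshevSum {k | k.Prime ∧ (k : ZMod q) = a} n =
      ∑ k ∈ Finset.Icc 1 n, if k.Prime then 0 else residueClass a k := by
  rw [chebyshevSum, Finset.sum_filter, Nat.floor_natCast, ← Finset.sum_sub_distrib]
  refine Finset.sum_congr rfl fun k _ ↦ ?_
  by_cases hk : k.Prime
  · by_cases hka : (k : ZMod q) = a
    · simp [hk, hka, residueClass, ArithmeticFunction.vonMangoldt_apply_prime hk]
    · simp [hk, hka, residueClass]
  · simp [hk]

lemma sum_residueClass_sub_chebyshevSum_mem_Icc (a : ZMod q) {n : ℕ} (hn : 1 ≤ n) :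
    ∑ k ∈ Finset.Icc 1 n, residueClass a k - chebyshevSum {k | k.Prime ∧ (k : ZMod q) = a} n ∈
      Icc 0 (2 * √(n : ℝ) * Real.log n) := by
  rw [sum_residueClass_sub_chebyshevSum]
  refine ⟨Finset.sum_nonneg fun k _ ↦ ?_,
    le_trans ?_ (Chebyshev.psi_sub_theta_le (mod_cast hn))⟩
  · split_ifs
    exacts [le_rfl, residueClass_nonneg a k]
  · rw [Chebyshev.psi_sub_theta_eq_sum_not_prime, Nat.floor_natCast, Finset.sum_filter]
    refine Finset.sum_le_sum fun k _ ↦ ?_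
    by_cases hk : k.Prime
    · simp [hk]
    · simpa [hk] using residueClass_le a k

lemma tendsto_two_mul_sqrt_mul_log_div_atTop :
    Tendsto (fun n : ℕ ↦ 2 * √(n : ℝ) * Real.log n / n) atTop (𝓝 0) := by
  have hlog : Tendsto (fun t : ℝ ↦ 2 * (Real.log t / t ^ (1 / 2 : ℝ))) atTop (𝓝 0) := by
    have hlittle := isLittleO_log_rpow_atTop (r := 1 / 2) (by norm_num)
    simpa using hlittle.tendsto_div_nhds_zero.const_mul 2
  refine (hlog.comp tendsto_natCast_atTop_atTop).congr fun n ↦ ?_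
  rw [Function.comp_apply, ← Real.sqrt_eq_rpow, mul_assoc, mul_div_assoc, mul_comm √_,
    mul_div_assoc, Real.sqrt_div_self', mul_one_div]

theorem tendsto_chebyshevSum_residueClass_div [NeZero q] {a : ZMod q} (ha : IsUnit a) :
    Tendsto (fun n : ℕ ↦ chebyshevSum {k | k.Prime ∧ (k : ZMod q) = a} n / n) atTop
      (𝓝 (q.totient : ℝ)⁻¹) := by
  have hdiff : Tendsto (fun n : ℕ ↦ (∑ k ∈ Finset.Icc 1 n, residueClass a k -
      chebyshevSum {k | k.Prime ∧ (k : ZMod q) = a} n) / n) atTop (𝓝 0) := by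
    refine squeeze_zero' ?_ ?_ tendsto_two_mul_sqrt_mul_log_div_atTop <;>
    filter_upwards [eventually_ge_atTop 1] with n hn
    · exact div_nonneg (sum_residueClass_sub_chebyshevSum_mem_Icc a hn).1 (Nat.cast_nonneg n)
    · gcongr
      exact (sum_residueClass_sub_chebyshevSum_mem_Icc a hn).2
  refine ((tendsto_sum_residueClass_div ha).sub hdiff |>.congr fun n ↦ ?_).trans_eq ?_
  · rw [← sub_div, sub_sub_cancel]
  · rw [sub_zero]

theorem hasPrimeDensity_residueClasses [NeZero q] {A : Finset (ZMod q)} (hA : ∀ a ∈ A, IsUnit a) :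
    HasPrimeDensity {k | k.Prime ∧ (k : ZMod q) ∈ A} (A.card * (q.totient : ℝ)⁻¹) := by
  refine hasPrimeDensity_of_tendsto_chebyshevSum_div ?_
  have hsum := tendsto_finsetSum A fun a ha ↦ tendsto_chebyshevSum_residueClass_div (hA a ha)
  rw [Finset.sum_const, nsmul_eq_mul] at hsum
  refine hsum.congr fun n ↦ ?_
  simp only [← Finset.sum_div, chebyshevSum, Finset.sum_filter]
  rw [Finset.sum_comm]
  refine congrArg (· / (n : ℝ)) (Finset.sum_congr rfl fun k _ ↦ ?_)
  by_cases hk : k.Prime <;> simp [hk]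

end

/-! ### Primes with a prescribed Jacobi symbol -/

section
open NumberTheorySymbols
variable {D : ℤ} {e : ℤ} {n : ℕ}

lemma jacobiSym_eq_one_of_modEq_one (hn : Odd n) (h : n ≡ 1 [MOD 4 * D.natAbs]) :
    J(D | n) = 1 := by
  rw [jacobiSym.mod_right D hn, h, ← jacobiSym.mod_right D odd_one, jacobiSym.one_right]

lemma coprime_four_mul_natAbs (hn : Odd n) (h : J(D | n) ≠ 0) : n.Coprime (4 * D.natAbs) := by
  have : NeZero n := ⟨hn.pos.ne'⟩
  refine .mul_right (Nat.Coprime.pow_right 2 (Nat.coprime_two_right.2 hn)) ?_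
  rwa [Ne, jacobiSym.eq_zero_iff_not_coprime, not_not, Int.gcd_eq_natAbs, Int.natAbs_natCast,
    Nat.gcd_comm] at h

lemma exists_eq_neg_sq_or_eq_prime_pow_mul (hD : ¬IsSquare D) :
    (∃ s : ℕ, s ≠ 0 ∧ D = -(s : ℤ) ^ 2) ∨
      ∃ (p j : ℕ) (D' : ℤ), p.Prime ∧ p.Coprime D'.natAbs ∧ D = (p : ℤ) ^ (2 * j + 1) * D' := by
  obtain ⟨a, s, has, ha⟩ := Nat.sq_mul_squarefree D.natAbs
  have hs : s ≠ 0 := by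
    rintro rfl
    refine hD ⟨0, Int.natAbs_eq_zero.1 ?_⟩
    simpa using has.symm
  have hDsign : D = D.sign * (s ^ 2 * a : ℕ) := by rw [has, Int.sign_mul_natAbs]
  have hD0 : D ≠ 0 := fun h ↦ hD (h ▸ IsSquare.zero)
  rcases eq_or_ne a 1 with rfl | ha1
  · refine .inl ⟨s, hs, ?_⟩
    have hDabs : D.natAbs = s ^ 2 := by rw [← has, mul_one]
    rcases Int.natAbs_eq D with hpos | hneg
    · exact absurd ⟨(s : ℤ), by rw [hpos, hDabs]; push_cast; ring⟩ hD
    · rw [hneg, hDabs]; push_cast; rfl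
  · obtain ⟨p, hp, a, rfl⟩ := Nat.exists_prime_and_dvd ha1
    obtain ⟨j, s, hps, rfl⟩ := Nat.exists_eq_pow_mul_and_not_dvd hs p hp.ne_one
    refine .inr ⟨p, j, D.sign * (s ^ 2 * a : ℕ), hp, ?_, ?_⟩
    · have hpa : ¬p ∣ a := fun h ↦
        hp.one_lt.ne' (Nat.isUnit_iff.1 (ha p (Nat.mul_dvd_mul_left p h)))
      rw [Int.natAbs_mul, Int.natAbs_sign_of_ne_zero hD0, one_mul, Int.natAbs_natCast,
        hp.coprime_iff_not_dvd, hp.dvd_mul, not_or]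
      exact ⟨mt hp.dvd_of_dvd_pow hps, hpa⟩
    · nth_rw 1 [hDsign]
      push_cast
      ring

lemma jacobiSym_neg_sq_four_mul_sq_sub_one {s : ℕ} (hs : s ≠ 0) :
    J(-(s : ℤ) ^ 2 | 4 * s ^ 2 - 1) = -1 := by
  have hs2 : 1 ≤ s ^ 2 := Nat.one_le_pow _ _ (Nat.pos_of_ne_zero hs)
  have hodd : Odd (4 * s ^ 2 - 1) := by rw [Nat.odd_iff]; lia
  have hcop : s.Coprime (4 * s ^ 2 - 1) := by
    refine Nat.Coprime.coprime_dvd_left (⟨4 * s, by ring⟩ : s ∣ 4 * s ^ 2) ?_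
    rw [← Nat.sub_add_cancel (by lia : 1 ≤ 4 * s ^ 2), Nat.add_sub_cancel]
    simp
  rw [neg_eq_neg_one_mul, jacobiSym.mul_left, jacobiSym.pow_left,
    jacobiSym.sq_one (by simpa [Int.gcd_natCast_natCast] using hcop), mul_one,
    jacobiSym.at_neg_one hodd, ZMod.χ₄_nat_three_mod_four]
  lia

lemma exists_modEq_one_jacobiSym_two_eq_neg_one {m : ℕ} (hm : Nat.Coprime 2 m) :
    ∃ b : ℕ, Odd b ∧ b ≡ 1 [MOD 4 * m] ∧ J(2 | b) = -1 := by
  obtain ⟨b, hb8 : b % 8 = 5, hbm⟩ := Nat.chineseRemainder (hm.pow_left 3) 5 1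
  have hodd : Odd b := by rw [Nat.odd_iff]; lia
  refine ⟨b, hodd, ?_, ?_⟩
  · have hb4 : b ≡ 1 [MOD 4] := show b % 4 = 1 by lia
    exact (Nat.modEq_and_modEq_iff_modEq_mul (hm.pow_left 2)).1 ⟨hb4, hbm⟩
  · have hb2 : b % 2 ≠ 0 := by lia
    rw [jacobiSym.at_two hodd, ZMod.χ₈_nat_eq_if_mod_eight, if_neg hb2, if_neg (by lia)]

lemma exists_modEq_one_jacobiSym_odd_prime_eq_neg_one {p m : ℕ} (hp : p.Prime) (hp2 : p ≠ 2)
    (hm : p.Coprime m) : ∃ b : ℕ, Odd b ∧ b ≡ 1 [MOD 4 * m] ∧ J((p : ℤ) | b) = -1 := by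
  have := Fact.mk hp
  obtain ⟨r, hr⟩ := FiniteField.exists_nonsquare (F := ZMod p) (by rwa [ZMod.ringChar_zmod_n])
  have hcop : (4 * m).Coprime p :=
    (((Nat.coprime_primes Nat.prime_two hp).2 hp2.symm).pow_left 2).mul_left hm.symm
  obtain ⟨b, hb, hbp⟩ := Nat.chineseRemainder hcop 1 r.val
  have hb4 : b % 4 = 1 := Nat.ModEq.of_mul_right _ hb
  refine ⟨b, by rw [Nat.odd_iff]; lia, hb, ?_⟩
  have hbr : ((b : ℤ) : ZMod p) = r := by
    simpa using (ZMod.natCast_eq_natCast_iff _ _ _).2 hbp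
  rwa [← jacobiSym.quadratic_reciprocity_one_mod_four hb4 (hp.odd_of_ne_two hp2),
    ← jacobiSym.legendreSym.to_jacobiSym, legendreSym.eq_neg_one_iff, hbr]

theorem exists_odd_jacobiSym_eq_neg_one (hD : ¬IsSquare D) : ∃ b : ℕ, Odd b ∧ J(D | b) = -1 := by
  rcases exists_eq_neg_sq_or_eq_prime_pow_mul hD with ⟨s, hs, rfl⟩ | ⟨p, j, D', hp, hpD', rfl⟩
  · refine ⟨_, ?_, jacobiSym_neg_sq_four_mul_sq_sub_one hs⟩
    have hs2 : 1 ≤ s ^ 2 := Nat.one_le_pow _ _ (Nat.pos_of_ne_zero hs)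
    rw [Nat.odd_iff]
    lia
  · obtain ⟨b, hb, hb1, hpb⟩ :
        ∃ b : ℕ, Odd b ∧ b ≡ 1 [MOD 4 * D'.natAbs] ∧ J((p : ℤ) | b) = -1 := by
      rcases eq_or_ne p 2 with rfl | hp2
      · exact exists_modEq_one_jacobiSym_two_eq_neg_one hpD'
      · exact exists_modEq_one_jacobiSym_odd_prime_eq_neg_one hp hp2 hpD'
    refine ⟨b, hb, ?_⟩
    rw [jacobiSym.mul_left, jacobiSym.pow_left, hpb, jacobiSym_eq_one_of_modEq_one hb hb1, mul_one]
    exact Odd.neg_one_pow ⟨j, rfl⟩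

/-- The residue classes `a` modulo `4 |D|` coprime to the modulus with `(D / a) = e`; the Jacobi
symbol `(D / n)` of an odd `n` only depends on `n` modulo `4 |D|`. -/
noncomputable def jacobiClasses (D : ℤ) [NeZero (4 * D.natAbs)] (e : ℤ) :
    Finset (ZMod (4 * D.natAbs)) :=
  {a | IsUnit a ∧ J(D | a.val) = e}

lemma jacobiSym_val_natCast (hn : Odd n) : J(D | (n : ZMod (4 * D.natAbs)).val) = J(D | n) := by
  rw [ZMod.val_natCast, jacobiSym.mod_right D hn]

lemma isUnit_natCast_of_jacobiSym_ne_zero (hn : Odd n) (h : J(D | n) ≠ 0) :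
    IsUnit (n : ZMod (4 * D.natAbs)) :=
  (ZMod.isUnit_iff_coprime _ _).2 (coprime_four_mul_natAbs hn h)

lemma natCast_mem_jacobiClasses_iff [NeZero (4 * D.natAbs)] (hn : Odd n) (he : e ≠ 0) :
    (n : ZMod (4 * D.natAbs)) ∈ jacobiClasses D e ↔ J(D | n) = e := by
  rw [jacobiClasses, Finset.mem_filter_univ, jacobiSym_val_natCast hn, and_iff_right_iff_imp]
  rintro rfl
  exact isUnit_natCast_of_jacobiSym_ne_zero hn he

section
variable [NeZero (4 * D.natAbs)] {a : ZMod (4 * D.natAbs)}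

lemma coprime_val_of_isUnit (ha : IsUnit a) : a.val.Coprime (4 * D.natAbs) :=
  (ZMod.isUnit_iff_coprime _ _).1 (by rwa [ZMod.natCast_zmod_val])

lemma odd_val_of_isUnit (ha : IsUnit a) : Odd a.val :=
  Nat.coprime_two_right.1 <| (coprime_val_of_isUnit ha).coprime_dvd_right
    ⟨2 * D.natAbs, by ring⟩

lemma jacobiSym_val_eq_one_or_neg_one (ha : IsUnit a) : J(D | a.val) = 1 ∨ J(D | a.val) = -1 := by
  refine jacobiSym.eq_one_or_neg_one ?_
  rw [Int.gcd_eq_natAbs, Int.natAbs_natCast]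
  exact ((coprime_val_of_isUnit ha).coprime_dvd_right (Nat.dvd_mul_left _ _)).symm

lemma mul_natCast_mem_jacobiClasses {b : ℕ} (hb : Odd b) (hDb : J(D | b) = -1)
    (ha : a ∈ jacobiClasses D e) : a * b ∈ jacobiClasses D (-e) := by
  obtain ⟨hau, rfl⟩ := (Finset.mem_filter_univ a).1 ha
  have hab : a * b = ((a.val * b : ℕ) : ZMod (4 * D.natAbs)) := by simp
  have : NeZero a.val := ⟨(odd_val_of_isUnit hau).pos.ne'⟩
  have : NeZero b := ⟨hb.pos.ne'⟩
  refine (Finset.mem_filter_univ _).2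
    ⟨hau.mul (isUnit_natCast_of_jacobiSym_ne_zero hb (by simp [hDb])), ?_⟩
  rw [hab, jacobiSym_val_natCast ((odd_val_of_isUnit hau).mul hb), jacobiSym.mul_right, hDb,
    mul_neg_one]

lemma card_jacobiClasses_le_neg (hD : ¬IsSquare D) (e : ℤ) :
    (jacobiClasses D e).card ≤ (jacobiClasses D (-e)).card := by
  obtain ⟨b, hb, hDb⟩ := exists_odd_jacobiSym_eq_neg_one hD
  have hbu := isUnit_natCast_of_jacobiSym_ne_zero (D := D) hb (by simp [hDb])
  exact Finset.card_le_card_of_injOn (· * (b : ZMod (4 * D.natAbs)))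
    (fun a ha ↦ mul_natCast_mem_jacobiClasses hb hDb ha) (fun _ _ _ _ h ↦ hbu.mul_right_cancel h)

lemma card_jacobiClasses_one_add_neg_one :
    (jacobiClasses D 1).card + (jacobiClasses D (-1)).card = (4 * D.natAbs).totient := by
  have hdisj : Disjoint (jacobiClasses D 1) (jacobiClasses D (-1)) :=
    Finset.disjoint_filter.2 fun a _ ha ha' ↦ by simp [ha.2] at ha'
  rw [← ZMod.card_units_eq_totient, ← Finset.card_union_of_disjoint hdisj, ← Finset.card_univ,
    ← Finset.card_map ⟨Units.val, Units.val_injective⟩]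
  congr 1
  ext a
  simp only [jacobiClasses, ← Finset.filter_or, ← and_or_left, Finset.mem_filter_univ,
    Finset.mem_map, Finset.mem_univ, true_and, Function.Embedding.coeFn_mk]
  exact and_iff_left_of_imp jacobiSym_val_eq_one_or_neg_one

lemma card_jacobiClasses_mul_two (hD : ¬IsSquare D) (he : e = 1 ∨ e = -1) :
    (jacobiClasses D e).card * 2 = (4 * D.natAbs).totient := by
  have hle := card_jacobiClasses_le_neg hD 1
  have hge := card_jacobiClasses_le_neg hD (-1)
  have hsum := card_jacobiClasses_one_add_neg_one (D := D)
  rw [neg_neg] at hge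
  rcases he with rfl | rfl <;> lia

end

theorem hasPrimeDensity_jacobiSym_eq (hD : ¬IsSquare D) (he : e = 1 ∨ e = -1) :
    HasPrimeDensity {p | p.Prime ∧ J(D | p) = e} (1 / 2) := by
  have hD0 : D ≠ 0 := fun h ↦ hD (h ▸ IsSquare.zero)
  have : NeZero (4 * D.natAbs) := ⟨by simp [hD0]⟩
  have he0 : e ≠ 0 := by rcases he with rfl | rfl <;> decide
  have hdens := hasPrimeDensity_residueClasses (A := jacobiClasses D e)
    fun a ha ↦ ((Finset.mem_filter_univ a).1 ha).1
  have hhalf : ((jacobiClasses D e).card : ℝ) * ((4 * D.natAbs).totient : ℝ)⁻¹ = 1 / 2 := by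
    have htot : (0 : ℝ) < (4 * D.natAbs).totient :=
      Nat.cast_pos.2 (Nat.totient_pos.2 (NeZero.pos _))
    rw [← div_eq_mul_inv, div_eq_div_iff htot.ne' two_ne_zero, one_mul]
    exact_mod_cast card_jacobiClasses_mul_two hD he
  rw [hhalf] at hdens
  refine hdens.congr (K := 2) fun p hp2 ↦ and_congr_right fun hp ↦ ?_
  exact natCast_mem_jacobiClasses_iff (hp.odd_of_ne_two hp2.ne') he0

theorem hasPrimeDensity_setOf_prime : HasPrimeDensity {p | p.Prime} 1 := by
  have hdens := hasPrimeDensity_residueClasses (q := 1) (A := Finset.univ)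
    fun a _ ↦ Subsingleton.elim 1 a ▸ isUnit_one
  simpa only [Finset.mem_univ, and_true, Finset.card_univ, ZMod.card, Nat.totient_one,
    Nat.cast_one, inv_one, mul_one] using hdens

end

/-! ### Iterated sums of reciprocals -/

section
variable {α : Type*} {l : Filter α}

lemma isEquivalent_sub_of_hasDerivAt {f : ℝ → ℝ} {f' x : ℝ} (h : HasDerivAt f f' x)
    (hf' : f' ≠ 0) : (fun y ↦ f y - f x) ~[𝓝 x] fun y ↦ f' * (y - x) := by
  refine (h.isLittleO.trans_isBigO (isBigO_const_mul_self f'⁻¹ _ _ |>.congr_left fun y ↦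
    inv_mul_cancel_left₀ hf' (y - x))).congr_left fun y ↦ ?_
  rw [Pi.sub_apply, smul_eq_mul, mul_comm]

lemma isEquivalent_log_nhds_one : Real.log ~[𝓝 1] fun y ↦ y - 1 := by
  simpa using isEquivalent_sub_of_hasDerivAt (Real.hasDerivAt_log one_ne_zero) (by simp)

lemma isEquivalent_log_add_one_sub_log :
    (fun t ↦ Real.log (t + 1) - Real.log t) ~[atTop] fun t ↦ (t + 1)⁻¹ := by
  have hdiv : Tendsto (fun t : ℝ ↦ t / (t + 1)) atTop (𝓝 1) := by
    have h := (tendsto_inv_atTop_zero.comp (tendsto_atTop_add_const_right atTop (1 : ℝ)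
      tendsto_id)).const_sub 1
    rw [sub_zero] at h
    refine h.congr' ?_
    filter_upwards [eventually_gt_atTop 0] with t ht
    simp only [Function.comp_apply, id]
    field_simp
    ring
  refine ((isEquivalent_log_nhds_one.comp_tendsto hdiv).neg.congr_left ?_).congr_right ?_ <;>
  filter_upwards [eventually_gt_atTop 0] with t ht <;> simp only [Function.comp_apply]
  · rw [Real.log_div ht.ne' (by positivity), neg_sub]
  · field_simp
    ring

lemma tendsto_log_add_one_div_log :
    Tendsto (fun t ↦ Real.log (t + 1) / Real.log t) atTop (𝓝 1) := by
  have h := ((Real.tendsto_log_comp_add_sub_log 1).div_atTop Real.tendsto_log_atTop).const_add 1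
  rw [add_zero] at h
  refine h.congr' ?_
  filter_upwards [eventually_gt_atTop 1] with t ht
  have := Real.log_pos ht
  field_simp
  ring

lemma isEquivalent_log_log_add_one_sub_log_log :
    (fun t ↦ Real.log (Real.log (t + 1)) - Real.log (Real.log t)) ~[atTop]
      fun t ↦ (t + 1)⁻¹ / Real.log t := by
  have hlog := isEquivalent_log_nhds_one.comp_tendsto tendsto_log_add_one_div_log
  refine (hlog.congr_left ?_).trans <|
    (isEquivalent_log_add_one_sub_log.div (.refl (u := Real.log))).congr_left ?_ <;>
  filter_upwards [eventually_gt_atTop 1] with t ht <;>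
  have hlog := Real.log_pos ht
  · have hlog' := Real.log_pos (ht.trans (lt_add_one t))
    rw [Function.comp_apply, Real.log_div hlog'.ne' hlog.ne']
  · simp only [Function.comp_apply, Pi.div_apply]
    field_simp

lemma tendsto_log_log_atTop : Tendsto (fun t ↦ Real.log (Real.log t)) atTop atTop :=
  Real.tendsto_log_atTop.comp Real.tendsto_log_atTop

theorem sum_range_isEquivalent_of_sub {u V : ℕ → ℝ} (hV : Tendsto V atTop atTop)
    (hmono : ∀ᶠ n in atTop, V n ≤ V (n + 1)) (h : u ~[atTop] fun n ↦ V (n + 1) - V n) :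
    (fun n ↦ ∑ j ∈ Finset.range n, u j) ~[atTop] V := by
  obtain ⟨N, hN⟩ := eventually_atTop.1 hmono
  have habs : ∀ n, ∑ j ∈ Finset.range (N + n), |V (j + 1) - V j| =
      V (N + n) + (∑ j ∈ Finset.range N, |V (j + 1) - V j| - V N) := by
    intro n
    rw [Finset.sum_range_add, Finset.sum_congr rfl fun j _ ↦
      abs_of_nonneg (sub_nonneg.2 (hN (N + j) (Nat.le_add_right N j)))]
    simp only [add_assoc N, Finset.sum_range_sub (fun j ↦ V (N + j)), add_zero]
    ring
  have hconst : ∀ C : ℝ, (fun _ ↦ C) =o[atTop] V := fun C ↦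
    isLittleO_const_left.2 (.inr (tendsto_abs_atTop_atTop.comp hV))
  have habs' : (fun n ↦ ∑ j ∈ Finset.range n, |V (j + 1) - V j|) ~[atTop] V := by
    refine (IsEquivalent.refl.add_isLittleO
      (hconst (∑ j ∈ Finset.range N, |V (j + 1) - V j| - V N))).congr_left ?_
    filter_upwards [eventually_ge_atTop N] with n hn
    obtain ⟨m, rfl⟩ := Nat.exists_eq_add_of_le hn
    rw [habs, Pi.add_apply]
  have hsum := (IsLittleO.sum_range h.isLittleO.abs_right (fun _ ↦ abs_nonneg _)
    (habs'.symm.tendsto_atTop hV)).trans_isEquivalent habs'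
  refine (hsum.sub (hconst (V 0))).congr_left fun n ↦ ?_
  simp only [Pi.sub_apply]
  rw [Finset.sum_sub_distrib, Finset.sum_range_sub]
  ring

lemma pow_sub_pow_isEquivalent {u v : α → ℝ} (h : u ~[l] v) (hv : ∀ᶠ a in l, v a ≠ 0) (k : ℕ) :
    (fun a ↦ u a ^ (k + 1) - v a ^ (k + 1)) ~[l] fun a ↦ (k + 1) * (v a ^ k * (u a - v a)) := by
  have hk : ((k + 1 : ℕ) : ℝ) * 1 ^ (k + 1 - 1) ≠ 0 := by positivity
  have hpow := isEquivalent_sub_of_hasDerivAt (hasDerivAt_pow (k + 1) (1 : ℝ)) hk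
  have hcomp := (IsEquivalent.refl (u := fun a ↦ v a ^ (k + 1))).mul
    (hpow.comp_tendsto ((isEquivalent_iff_tendsto_one hv).1 h))
  refine (hcomp.congr_left ?_).congr_right ?_ <;> filter_upwards [hv] with a ha <;>
  simp only [Pi.mul_apply, Function.comp_apply, Pi.div_apply]
  · rw [one_pow, mul_sub, mul_one, ← mul_pow, mul_div_cancel₀ _ ha]
  · push_cast
    simp only [one_pow]
    field_simp
    ring

/-- The sum of the reciprocals of the positive integers below `n` that lie in `S`. -/
noncomputable def reciprocalSum (S : Set ℕ) (n : ℕ) : ℝ :=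
  ∑ j ∈ Finset.range n with j ∈ S, (j : ℝ)⁻¹

variable {S : Set ℕ} {c : ℝ}

lemma reciprocalSum_succ_sub (S : Set ℕ) (n : ℕ) :
    reciprocalSum S (n + 1) - reciprocalSum S n = if n ∈ S then (n : ℝ)⁻¹ else 0 := by
  simp only [reciprocalSum, Finset.sum_filter, Finset.sum_range_succ_sub_sum]

lemma reciprocalSum_mono (S : Set ℕ) : Monotone (reciprocalSum S) := by
  refine monotone_nat_of_le_succ fun n ↦ sub_nonneg.1 ?_
  rw [reciprocalSum_succ_sub]
  positivity

lemma countUpTo_natCast_succ (S : Set ℕ) (n : ℕ) :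
    countUpTo S (n + 1 : ℕ) = countUpTo S n + if n + 1 ∈ S then 1 else 0 := by
  simp only [countUpTo, Nat.floor_natCast, Finset.card_filter, Nat.cast_sum,
    Finset.sum_Icc_succ_top (Nat.le_add_left 1 n)]
  push_cast
  rfl

lemma reciprocalSum_eq_add_sum (S : Set ℕ) (n : ℕ) :
    reciprocalSum S (n + 1) = countUpTo S n / (n + 1) +
      ∑ j ∈ Finset.range (n + 1), countUpTo S j / (j * (j + 1)) := by
  induction n with
  | zero => simp [reciprocalSum, countUpTo, Finset.sum_filter]
  | succ n ih =>
    rw [← sub_add_cancel (reciprocalSum S _) (reciprocalSum S (n + 1)), reciprocalSum_succ_sub, ih,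
      Finset.sum_range_succ _ (n + 1), countUpTo_natCast_succ]
    push_cast
    split_ifs <;> field_simp <;> ring

lemma countUpTo_div_isEquivalent (hS : HasPrimeDensity S c) (hc : 0 < c) :
    (fun n : ℕ ↦ countUpTo S n / (n * (n + 1))) ~[atTop] fun n ↦
      c * Real.log (Real.log (n + 1 : ℕ)) - c * Real.log (Real.log n) := by
  have hcount := ((isEquivalent_const_iff_tendsto hc.ne').2 hS).mul
    isEquivalent_log_log_add_one_sub_log_log.symm
  refine (hcount.comp_tendsto tendsto_natCast_atTop_atTop).congr_left ?_ |>.congr_right ?_ <;>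
  filter_upwards [eventually_gt_atTop 1] with n hn <;>
  simp only [Function.comp_apply, Pi.mul_apply, Function.const_apply]
  · have hlog : 0 < Real.log n := Real.log_pos (mod_cast hn)
    field_simp
  · push_cast
    ring

theorem reciprocalSum_isEquivalent (hS : HasPrimeDensity S c) (hc : 0 < c) :
    reciprocalSum S ~[atTop] fun n ↦ c * Real.log (Real.log n) := by
  have hV : Tendsto (fun n : ℕ ↦ c * Real.log (Real.log n)) atTop atTop :=
    (tendsto_log_log_atTop.comp tendsto_natCast_atTop_atTop).const_mul_atTop hc
  have hmono : ∀ᶠ n : ℕ in atTop,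
      c * Real.log (Real.log n) ≤ c * Real.log (Real.log (n + 1 : ℕ)) := by
    filter_upwards [eventually_gt_atTop 1] with n hn
    have hlog : 0 < Real.log n := Real.log_pos (mod_cast hn)
    gcongr
    lia
  have hsum := sum_range_isEquivalent_of_sub hV hmono (countUpTo_div_isEquivalent hS hc)
  have hbdd : (fun n ↦ reciprocalSum S n - ∑ j ∈ Finset.range n, countUpTo S j / (j * (j + 1)))
      =O[atTop] fun _ ↦ (1 : ℝ) := by
    refine .of_bound' ?_
    filter_upwards [eventually_gt_atTop 0] with n hn
    obtain ⟨m, rfl⟩ := Nat.exists_eq_succ_of_ne_zero hn.ne'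
    have hle := countUpTo_le S (Nat.cast_nonneg (α := ℝ) m)
    rw [reciprocalSum_eq_add_sum, add_sub_cancel_right, norm_one,
      Real.norm_of_nonneg (div_nonneg (countUpTo_nonneg S m) (by positivity))]
    exact (div_le_one (by positivity)).2 (by linarith)
  have hlittle := hbdd.trans_isLittleO
    (isLittleO_const_left.2 (.inr (tendsto_abs_atTop_atTop.comp hV)))
  refine (hsum.add_isLittleO hlittle).congr_left (.of_forall fun n ↦ ?_)
  rw [Pi.add_apply, add_sub_cancel]

/-- The sum of `1 / (j₀ ⋯ jₖ₋₁)` over all `j₀ < ⋯ < jₖ₋₁ < n` with `jᵢ ∈ S i`. -/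
noncomputable def iteratedReciprocalSum (S : ℕ → Set ℕ) : ℕ → ℕ → ℝ
  | 0, _ => 1
  | k + 1, n => ∑ j ∈ Finset.range n with j ∈ S k, (j : ℝ)⁻¹ * iteratedReciprocalSum S k j

lemma sum_mul_pow_reciprocalSum_isEquivalent (hS : Tendsto (reciprocalSum S) atTop atTop)
    (hc : 0 < c) (k : ℕ) {E : ℕ → ℝ} (hE : E ~[atTop] fun n ↦ c * reciprocalSum S n ^ k) :
    (fun n ↦ ∑ j ∈ Finset.range n with j ∈ S, (j : ℝ)⁻¹ * E j) ~[atTop]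
      fun n ↦ c / (k + 1) * reciprocalSum S n ^ (k + 1) := by
  have hle : ∀ n, reciprocalSum S n ≤ reciprocalSum S (n + 1) := fun n ↦
    reciprocalSum_mono S n.le_succ
  have hsucc : (fun n ↦ reciprocalSum S (n + 1)) ~[atTop] reciprocalSum S := by
    have hbdd : (fun n ↦ reciprocalSum S (n + 1) - reciprocalSum S n) =O[atTop]
        fun _ ↦ (1 : ℝ) := by
      refine .of_bound' (.of_forall fun n ↦ ?_)
      rw [reciprocalSum_succ_sub, norm_one]
      split_ifs
      · simpa using Nat.cast_inv_le_one n
      · simp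
    exact hbdd.trans_isLittleO (isLittleO_const_left.2 (.inr (tendsto_abs_atTop_atTop.comp hS)))
  have hpow := pow_sub_pow_isEquivalent hsucc (hS.eventually_ne_atTop 0) k
  simp only [Finset.sum_filter]
  refine sum_range_isEquivalent_of_sub
    ((tendsto_pow_atTop k.succ_ne_zero |>.comp hS).const_mul_atTop (by positivity)) ?_ ?_
  · filter_upwards [hS.eventually_ge_atTop 0] with n hn
    gcongr
    exact hle n
  · have hmul := (IsEquivalent.refl (u := fun n ↦
      reciprocalSum S (n + 1) - reciprocalSum S n)).mul hE
    refine (hmul.congr_left (.of_forall fun n ↦ ?_)).trans <|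
      ((IsEquivalent.refl (u := fun _ ↦ c / (k + 1))).mul hpow.symm).congr_left
        (.of_forall fun n ↦ ?_) |>.congr_right (.of_forall fun n ↦ ?_) <;>
    simp only [Pi.mul_apply]
    · rw [reciprocalSum_succ_sub, ite_mul, zero_mul]
    · field_simp
    · ring

theorem iteratedReciprocalSum_isEquivalent {S : ℕ → Set ℕ} {c : ℕ → ℝ}
    (hS : ∀ i, HasPrimeDensity (S i) (c i)) (hc : ∀ i, 0 < c i) (k : ℕ) :
    iteratedReciprocalSum S k ~[atTop] fun n ↦
      (∏ i ∈ Finset.range k, c i) / k.factorial * Real.log (Real.log n) ^ k := by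
  induction k with
  | zero => exact (EventuallyEq.of_eq (by ext; simp [iteratedReciprocalSum])).isEquivalent
  | succ k ih =>
    have hA := reciprocalSum_isEquivalent (hS k) (hc k)
    have htop : Tendsto (reciprocalSum (S k)) atTop atTop := hA.symm.tendsto_atTop
      ((tendsto_log_log_atTop.comp tendsto_natCast_atTop_atTop).const_mul_atTop (hc k))
    set C := (∏ i ∈ Finset.range k, c i) / k.factorial / c k ^ k with hC
    have hCpos : 0 < C := by
      have := Finset.prod_pos fun i (_ : i ∈ Finset.range k) ↦ hc i
      have := hc k
      positivity
    have hE : iteratedReciprocalSum S k ~[atTop] fun n ↦ C * reciprocalSum (S k) n ^ k := by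
      refine ih.trans <| ((IsEquivalent.refl (u := fun _ ↦ C)).mul (hA.symm.pow k)).congr_left
        (.of_forall fun n ↦ ?_)
      have := (hc k).ne'
      simp only [Pi.mul_apply, Pi.pow_apply, hC, mul_pow]
      field_simp
    refine (sum_mul_pow_reciprocalSum_isEquivalent htop hCpos k hE).trans <|
      ((IsEquivalent.refl (u := fun _ ↦ C / (k + 1))).mul (hA.pow (k + 1))).congr_right
        (.of_forall fun n ↦ ?_)
    have := (hc k).ne'
    simp only [Pi.mul_apply, Pi.pow_apply, hC, mul_pow, Finset.prod_range_succ, Nat.factorial_succ]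
    push_cast
    field_simp
    ring

end

section
variable {L : ℕ}

/-- The integer part of the `L`-th root of `x`, the threshold separating the small products from
the large ones. -/
noncomputable def floorRoot (L x : ℕ) : ℕ := ⌊(x : ℝ) ^ (L : ℝ)⁻¹⌋₊

lemma floorRoot_pow_le (hL : L ≠ 0) (x : ℕ) : floorRoot L x ^ L ≤ x := by
  have hfloor : (floorRoot L x : ℝ) ≤ (x : ℝ) ^ (L : ℝ)⁻¹ := Nat.floor_le (by positivity)
  have hpow := pow_le_pow_left₀ (Nat.cast_nonneg _) hfloor L
  rw [Real.rpow_inv_natCast_pow (Nat.cast_nonneg _) hL] at hpow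
  exact_mod_cast hpow

lemma floorRoot_le (hL : L ≠ 0) (x : ℕ) : floorRoot L x ≤ x :=
  (Nat.le_self_pow hL _).trans (floorRoot_pow_le hL x)

lemma tendsto_rpow_inv_atTop (hL : L ≠ 0) :
    Tendsto (fun x : ℕ ↦ (x : ℝ) ^ (L : ℝ)⁻¹) atTop atTop :=
  (tendsto_rpow_atTop (by positivity)).comp tendsto_natCast_atTop_atTop

lemma tendsto_floorRoot_atTop (hL : L ≠ 0) : Tendsto (floorRoot L) atTop atTop :=
  tendsto_nat_floor_atTop.comp (tendsto_rpow_inv_atTop hL)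

lemma log_floorRoot_isEquivalent (hL : L ≠ 0) :
    (fun x ↦ Real.log (floorRoot L x)) ~[atTop] fun x : ℕ ↦ (L : ℝ)⁻¹ * Real.log x := by
  have hroot := tendsto_rpow_inv_atTop hL
  have hfloor : (fun x ↦ (floorRoot L x : ℝ)) ~[atTop] fun x ↦ (x : ℝ) ^ (L : ℝ)⁻¹ :=
    isEquivalent_nat_floor.comp_tendsto hroot
  refine (hfloor.log hroot).congr_right ?_
  filter_upwards [eventually_gt_atTop 0] with x hx
  rw [Real.log_rpow (by positivity)]

lemma eventually_log_le_mul_log_floorRoot (hL : L ≠ 0) :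
    ∀ᶠ x : ℕ in atTop, Real.log x ≤ 2 * L * Real.log (floorRoot L x) := by
  have hlog : ∀ᶠ x : ℕ in atTop, (L : ℝ)⁻¹ * Real.log x ≠ 0 := by
    filter_upwards [eventually_gt_atTop 1] with x hx
    exact mul_ne_zero (by positivity) (Real.log_pos (mod_cast hx)).ne'
  have hratio := (isEquivalent_iff_tendsto_one hlog).1 (log_floorRoot_isEquivalent hL)
  filter_upwards [hratio.eventually (le_mem_nhds (show (1 / 2 : ℝ) < 1 by norm_num)),
    eventually_gt_atTop 1] with x hx hx1
  have hlogx : 0 < Real.log x := Real.log_pos (mod_cast hx1)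
  rw [Pi.div_apply, le_div_iff₀ (by positivity)] at hx
  field_simp at hx
  linarith

lemma log_log_floorRoot_isEquivalent (hL : L ≠ 0) :
    (fun x ↦ Real.log (Real.log (floorRoot L x))) ~[atTop] fun x : ℕ ↦ Real.log (Real.log x) := by
  have hlog : Tendsto (fun x : ℕ ↦ Real.log x) atTop atTop :=
    Real.tendsto_log_atTop.comp tendsto_natCast_atTop_atTop
  have hconst : (fun _ ↦ Real.log (L : ℝ)⁻¹) =o[atTop] fun x : ℕ ↦ Real.log (Real.log x) :=
    isLittleO_const_left.2
      (.inr (tendsto_abs_atTop_atTop.comp (Real.tendsto_log_atTop.comp hlog)))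
  refine ((log_floorRoot_isEquivalent hL).log
    (hlog.const_mul_atTop (by positivity))).trans ?_
  refine (IsEquivalent.refl.add_isLittleO hconst).congr_left ?_
  filter_upwards [hlog.eventually_gt_atTop 0] with x hx
  rw [Pi.add_apply, Real.log_mul (by positivity) hx.ne', add_comm]

lemma log_log_add_one_isEquivalent :
    (fun x : ℕ ↦ Real.log (Real.log (x + 1 : ℕ))) ~[atTop] fun x ↦ Real.log (Real.log x) := by
  have hlog := (isEquivalent_of_tendsto_one tendsto_log_add_one_div_log).log
    Real.tendsto_log_atTop
  refine (hlog.comp_tendsto tendsto_natCast_atTop_atTop).congr_left (.of_forall fun x ↦ ?_)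
  simp only [Function.comp_apply, Nat.cast_add, Nat.cast_one]

variable {S : ℕ → Set ℕ} {c : ℕ → ℝ}

lemma iteratedReciprocalSum_nonneg (S : ℕ → Set ℕ) (k n : ℕ) :
    0 ≤ iteratedReciprocalSum S k n := by
  induction k generalizing n with
  | zero => exact zero_le_one
  | succ k ih => exact Finset.sum_nonneg fun j _ ↦ mul_nonneg (by positivity) (ih j)

lemma iteratedReciprocalSum_mono (S : ℕ → Set ℕ) (k : ℕ) :
    Monotone (iteratedReciprocalSum S k) := by
  cases k with
  | zero => exact monotone_const
  | succ k =>
    refine fun a b h ↦ Finset.sum_le_sum_of_subset_of_nonneg (by gcongr) fun j _ _ ↦ ?_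
    exact mul_nonneg (by positivity) (iteratedReciprocalSum_nonneg S k j)

lemma iteratedReciprocalSum_succ_isEquivalent (hS : ∀ i, HasPrimeDensity (S i) (c i))
    (hc : ∀ i, 0 < c i) (k : ℕ) :
    (fun x ↦ iteratedReciprocalSum S k (x + 1)) ~[atTop] fun x : ℕ ↦
      (∏ i ∈ Finset.range k, c i) / k.factorial * Real.log (Real.log x) ^ k :=
  ((iteratedReciprocalSum_isEquivalent hS hc k).comp_tendsto (tendsto_add_atTop_nat 1)).trans
    (IsEquivalent.refl.mul (log_log_add_one_isEquivalent.pow k))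

lemma eventually_iteratedReciprocalSum_pos (hS : ∀ i, HasPrimeDensity (S i) (c i))
    (hc : ∀ i, 0 < c i) (k : ℕ) : ∀ᶠ n in atTop, 0 < iteratedReciprocalSum S k n := by
  refine (iteratedReciprocalSum_isEquivalent hS hc k).eventually_pos ?_
  filter_upwards [(tendsto_log_log_atTop.comp
    tendsto_natCast_atTop_atTop).eventually_gt_atTop 0] with n hn
  have := Finset.prod_pos fun i (_ : i ∈ Finset.range k) ↦ hc i
  have : 0 < Real.log (Real.log n) := hn
  positivity

lemma tendsto_iteratedReciprocalSum_floorRoot_div (hS : ∀ i, HasPrimeDensity (S i) (c i))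
    (hc : ∀ i, 0 < c i) (k : ℕ) (hL : L ≠ 0) :
    Tendsto (fun x ↦ iteratedReciprocalSum S k (floorRoot L x) /
      iteratedReciprocalSum S k (x + 1)) atTop (𝓝 1) := by
  have hroot := ((iteratedReciprocalSum_isEquivalent hS hc k).comp_tendsto
    (tendsto_floorRoot_atTop hL)).trans
    (IsEquivalent.refl.mul ((log_log_floorRoot_isEquivalent hL).pow k))
  refine (isEquivalent_iff_tendsto_one ?_).1
    (hroot.trans (iteratedReciprocalSum_succ_isEquivalent hS hc k).symm)
  filter_upwards [(tendsto_add_atTop_nat 1).eventually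
    (eventually_iteratedReciprocalSum_pos hS hc k)] with x hx using hx.ne'

end

/-! ### Products of increasing primes -/

section
variable {S : ℕ → Set ℕ} {k m n w x y : ℕ}

/-- The products `j₀ ⋯ jₖ₋₁` with `j₀ < ⋯ < jₖ₋₁ < y` and `jᵢ ∈ S i`, built by adjoining the largest
factor last. -/
noncomputable def increasingProducts (S : ℕ → Set ℕ) : ℕ → ℕ → Finset ℕ
  | 0, _ => {1}
  | k + 1, y => {q ∈ Finset.range y | q ∈ S k}.biUnion fun q ↦
      (increasingProducts S k q).image (· * q)

lemma mem_increasingProducts_succ : n ∈ increasingProducts S (k + 1) y ↔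
    ∃ q < y, q ∈ S k ∧ ∃ m ∈ increasingProducts S k q, m * q = n := by
  simp [increasingProducts, and_assoc]

lemma increasingProducts_mono (S : ℕ → Set ℕ) (k : ℕ) : Monotone (increasingProducts S k) := by
  cases k with
  | zero => exact monotone_const
  | succ k =>
    intro y y' hy n hn
    obtain ⟨q, hq, h⟩ := mem_increasingProducts_succ.1 hn
    exact mem_increasingProducts_succ.2 ⟨q, hq.trans_le hy, h⟩

lemma le_pow_of_mem_increasingProducts (hn : n ∈ increasingProducts S k y) : n ≤ y ^ k := by
  induction k generalizing y n with
  | zero => exact (Finset.mem_singleton.1 hn).le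
  | succ k ih =>
    obtain ⟨q, hq, -, m, hm, rfl⟩ := mem_increasingProducts_succ.1 hn
    calc m * q ≤ q ^ k * q := Nat.mul_le_mul_right q (ih hm)
      _ = q ^ (k + 1) := (pow_succ q k).symm
      _ ≤ y ^ (k + 1) := Nat.pow_le_pow_left hq.le _

lemma pos_of_mem_increasingProducts (hS : ∀ i, 0 ∉ S i) (hn : n ∈ increasingProducts S k y) :
    0 < n := by
  induction k generalizing y n with
  | zero => exact (Finset.mem_singleton.1 hn).symm ▸ one_pos
  | succ k ih =>
    obtain ⟨q, -, hq, m, hm, rfl⟩ := mem_increasingProducts_succ.1 hn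
    exact Nat.mul_pos (ih hm) (Nat.pos_of_ne_zero fun h ↦ hS k (h ▸ hq))

/-- The possible largest factors `q` of an element `m * q ≤ x` of `increasingProducts S (k + 1)`
whose other factors multiply to `m`. -/
noncomputable def largestFactors (S : ℕ → Set ℕ) (k x m : ℕ) : Finset ℕ :=
  {q ∈ Finset.range (x + 1) | q ∈ S k ∧ m ∈ increasingProducts S k q ∧ m * q ≤ x}

lemma le_div_of_mem_largestFactors {q : ℕ} (hm : 0 < m) (hq : q ∈ largestFactors S k x m) :
    (q : ℝ) ≤ x / m := by
  rw [le_div_iff₀ (Nat.cast_pos.2 hm), mul_comm]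
  exact_mod_cast (Finset.mem_filter.1 hq).2.2.2

lemma card_largestFactors_le (hS : 0 ∉ S k) (hm : 0 < m) :
    ((largestFactors S k x m).card : ℝ) ≤ countUpTo (S k) (x / m) := by
  refine Nat.cast_le.2 (Finset.card_le_card fun q hq ↦ ?_)
  have hqS := (Finset.mem_filter.1 hq).2.1
  exact Finset.mem_filter.2 ⟨Finset.mem_Icc.2 ⟨Nat.pos_of_ne_zero fun h ↦ hS (h ▸ hqS),
    Nat.le_floor (le_div_of_mem_largestFactors hm hq)⟩, hqS⟩

lemma countUpTo_sub_le_card_largestFactors (hm : 0 < m) (hmw : m ∈ increasingProducts S k w) :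
    countUpTo (S k) (x / m) - w ≤ (largestFactors S k x m).card := by
  rw [sub_le_iff_le_add, countUpTo]
  suffices h : {q ∈ Finset.Icc 1 ⌊(x / m : ℝ)⌋₊ | q ∈ S k} ⊆
      largestFactors S k x m ∪ Finset.range w by
    have hcard := (Finset.card_le_card h).trans (Finset.card_union_le _ _)
    rw [Finset.card_range] at hcard
    exact_mod_cast hcard
  intro q hq
  simp only [Finset.mem_filter, Finset.mem_Icc, Nat.floor_div_natCast, Nat.floor_natCast,
    Nat.le_div_iff_mul_le hm] at hq
  obtain ⟨⟨-, hqm⟩, hqS⟩ := hq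
  refine Finset.mem_union.2 ((lt_or_ge q w).symm.imp (fun hwq ↦ Finset.mem_filter.2 ?_)
    Finset.mem_range.2)
  exact ⟨Finset.mem_range_succ_iff.2 ((Nat.le_mul_of_pos_right q hm).trans hqm), hqS,
    increasingProducts_mono S k hwq hmw, mul_comm q m ▸ hqm⟩

lemma le_div_of_notMem_increasingProducts (hm : 0 < m) (hmw : m ∉ increasingProducts S k w)
    (hne : (largestFactors S k x m).Nonempty) : (w : ℝ) ≤ x / m := by
  obtain ⟨q, hq⟩ := hne
  have hwq : w ≤ q := not_lt.1 fun h ↦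
    hmw (increasingProducts_mono S k h.le (Finset.mem_filter.1 hq).2.2.1)
  exact (Nat.cast_le.2 hwq).trans (le_div_of_mem_largestFactors hm hq)

/-- The number of `n ≤ x` of the form `j₀ ⋯ jₖ₋₁` with `j₀ < ⋯ < jₖ₋₁` and `jᵢ ∈ S i`. -/
noncomputable def productCount (S : ℕ → Set ℕ) (k x : ℕ) : ℕ :=
  {n ∈ increasingProducts S k (x + 1) | n ≤ x}.card

variable (hS : ∀ i, ∀ p ∈ S i, p.Prime)
include hS

lemma lt_of_prime_dvd_of_mem_increasingProducts (hn : n ∈ increasingProducts S k y) {p : ℕ}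
    (hp : p.Prime) (hpn : p ∣ n) : p < y := by
  induction k generalizing y n with
  | zero => exact absurd (Nat.dvd_one.1 (Finset.mem_singleton.1 hn ▸ hpn)) hp.ne_one
  | succ k ih =>
    obtain ⟨q, hqy, hq, m, hm, rfl⟩ := mem_increasingProducts_succ.1 hn
    rcases hp.dvd_mul.1 hpn with h | h
    · exact (ih hm h).trans hqy
    · exact (Nat.prime_dvd_prime_iff_eq hp (hS k q hq)).1 h ▸ hqy

lemma le_of_mul_eq_mul_of_mem_increasingProducts {q q' m' : ℕ} (hq : q.Prime) (hq' : q'.Prime)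
    (hm : m ∈ increasingProducts S k q) (h : m * q = m' * q') : q' ≤ q := by
  rcases hq'.dvd_mul.1 (h ▸ dvd_mul_left q' m') with hdvd | hdvd
  · exact (lt_of_prime_dvd_of_mem_increasingProducts hS hm hq' hdvd).le
  · exact ((Nat.prime_dvd_prime_iff_eq hq' hq).1 hdvd).le

lemma sum_increasingProducts_succ {α : Type*} [AddCommMonoid α] (k y : ℕ) (f : ℕ → α) :
    ∑ n ∈ increasingProducts S (k + 1) y, f n =
      ∑ q ∈ Finset.range y with q ∈ S k, ∑ m ∈ increasingProducts S k q, f (m * q) := by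
  have hdisj : PairwiseDisjoint {q ∈ Finset.range y | q ∈ S k} fun q ↦
      (increasingProducts S k q).image (· * q) := by
    intro q hq q' hq' hne
    refine Finset.disjoint_left.2 fun n hn hn' ↦ hne ?_
    obtain ⟨m, hm, rfl⟩ := Finset.mem_image.1 hn
    obtain ⟨m', hm', h⟩ := Finset.mem_image.1 hn'
    have hqp := hS k q hq.2
    have hqp' := hS k q' hq'.2
    exact (le_of_mul_eq_mul_of_mem_increasingProducts hS hqp' hqp hm' h).antisymm
      (le_of_mul_eq_mul_of_mem_increasingProducts hS hqp hqp' hm h.symm)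
  rw [increasingProducts, Finset.sum_biUnion (by exact_mod_cast hdisj)]
  refine Finset.sum_congr rfl fun q hq ↦ Finset.sum_image fun a _ b _ hab ↦ ?_
  exact Nat.eq_of_mul_eq_mul_right (hS k q (Finset.mem_filter.1 hq).2).pos hab

theorem sum_inv_increasingProducts (k y : ℕ) :
    ∑ m ∈ increasingProducts S k y, (m : ℝ)⁻¹ = iteratedReciprocalSum S k y := by
  induction k generalizing y with
  | zero => simp [increasingProducts, iteratedReciprocalSum]
  | succ k ih =>
    simp only [sum_increasingProducts_succ hS, iteratedReciprocalSum, ← ih, Finset.mul_sum,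
      Nat.cast_mul, mul_inv_rev]

theorem productCount_succ (k x : ℕ) : productCount S (k + 1) x =
    ∑ m ∈ increasingProducts S k (x + 1), (largestFactors S k x m).card := by
  have hfiber : ∀ q ∈ {q ∈ Finset.range (x + 1) | q ∈ S k},
      (∑ m ∈ increasingProducts S k q, if m * q ≤ x then 1 else 0) =
        ∑ m ∈ increasingProducts S k (x + 1),
          if m ∈ increasingProducts S k q ∧ m * q ≤ x then 1 else 0 := by
    intro q hq
    have hqx := (Finset.mem_range.1 (Finset.mem_filter.1 hq).1).le
    simp only [← Finset.card_filter, ← Finset.filter_filter, Finset.filter_mem_eq_inter,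
      Finset.inter_eq_right.2 (increasingProducts_mono S k hqx)]
  rw [productCount, Finset.card_filter, sum_increasingProducts_succ hS,
    Finset.sum_congr rfl hfiber, Finset.sum_comm]
  simp only [← Finset.card_filter, Finset.filter_filter, largestFactors]

end

section
variable {S : ℕ → Set ℕ} {k m w x M : ℕ} {B θ : ℝ}

lemma le_div_of_le_pow (hw : 0 < w) (hM : M ≠ 0) (hx : w ^ ((k + 1) * M) ≤ x) (hm : 0 < m)
    (hmw : m ≤ w ^ k) : (w : ℝ) ≤ x / m := by
  rw [le_div_iff₀ (Nat.cast_pos.2 hm)]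
  have hle : w * m ≤ x :=
    calc w * m ≤ w * w ^ k := Nat.mul_le_mul_left w hmw
      _ = w ^ (k + 1) := (pow_succ' w k).symm
      _ ≤ w ^ ((k + 1) * M) :=
        Nat.pow_le_pow_right hw (Nat.le_mul_of_pos_right _ (Nat.pos_of_ne_zero hM))
      _ ≤ x := hx
  exact_mod_cast hle

lemma one_sub_inv_mul_log_le_log_div (hw : 0 < w) (hM : M ≠ 0) (hx : w ^ ((k + 1) * M) ≤ x)
    (hm : 0 < m) (hmw : m ≤ w ^ k) :
    (1 - (M : ℝ)⁻¹) * Real.log x ≤ Real.log (x / m) := by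
  have hpow : m ^ M ≤ x :=
    calc m ^ M ≤ (w ^ k) ^ M := Nat.pow_le_pow_left hmw M
      _ = w ^ (k * M) := (pow_mul w k M).symm
      _ ≤ w ^ ((k + 1) * M) := Nat.pow_le_pow_right hw (by gcongr; lia)
      _ ≤ x := hx
  have hx0 : 0 < x := (pow_pos hm M).trans_le hpow
  have hlog : M * Real.log m ≤ Real.log x := by
    rw [← Real.log_pow]
    exact Real.log_le_log (by positivity) (mod_cast hpow)
  have hlog' : Real.log m ≤ (M : ℝ)⁻¹ * Real.log x := (le_inv_mul_iff₀ (by positivity)).2 hlog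
  rw [Real.log_div (by positivity) (by positivity)]
  linarith

lemma sum_card_largestFactors_le {T : Finset ℕ} (hS : 0 ∉ S k) (hx : 1 < x) (hB : 0 ≤ B)
    (hθ : 0 < θ) (hT : ∀ m ∈ T, 0 < m)
    (h : ∀ m ∈ T, (largestFactors S k x m).Nonempty → θ * Real.log x ≤ Real.log (x / m) ∧
      countUpTo (S k) (x / m) * Real.log (x / m) ≤ B * (x / m)) :
    ∑ m ∈ T, ((largestFactors S k x m).card : ℝ) ≤
      B / θ * (x / Real.log x) * ∑ m ∈ T, (m : ℝ)⁻¹ := by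
  rw [Finset.mul_sum]
  refine Finset.sum_le_sum fun m hm ↦ ?_
  have hlogx : 0 < Real.log x := Real.log_pos (mod_cast hx)
  rcases (largestFactors S k x m).eq_empty_or_nonempty with hempty | hne
  · rw [hempty, Finset.card_empty, Nat.cast_zero]
    positivity
  obtain ⟨hlog, hcount⟩ := h m hm hne
  calc ((largestFactors S k x m).card : ℝ) ≤ countUpTo (S k) (x / m) :=
        card_largestFactors_le hS (hT m hm)
    _ ≤ B * (x / m) / (θ * Real.log x) := by
        rw [le_div_iff₀ (by positivity)]
        exact (mul_le_mul_of_nonneg_left hlog (countUpTo_nonneg _ _)).trans hcount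
    _ = B / θ * (x / Real.log x) * (m : ℝ)⁻¹ := by field_simp

lemma sum_card_largestFactors_small_le (hS : ∀ i, ∀ p ∈ S i, p.Prime) (hM : 1 < M) (hw : 1 < w)
    (hx : w ^ ((k + 1) * M) ≤ x) (hB : 0 ≤ B)
    (hcount : ∀ t : ℝ, w ≤ t → countUpTo (S k) t * Real.log t ≤ B * t) :
    ∑ m ∈ increasingProducts S k w, ((largestFactors S k x m).card : ℝ) ≤
      B / (1 - (M : ℝ)⁻¹) * (x / Real.log x) * iteratedReciprocalSum S k w := by
  have hS0 : ∀ i, 0 ∉ S i := fun i h ↦ Nat.not_prime_zero (hS i 0 h)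
  have hpos : ∀ m ∈ increasingProducts S k w, 0 < m := fun m ↦ pos_of_mem_increasingProducts hS0
  rw [← sum_inv_increasingProducts hS]
  refine sum_card_largestFactors_le (hS0 k) ?_ hB (sub_pos.2 (inv_lt_one_of_one_lt₀ ?_)) hpos
    fun m hm _ ↦ ⟨?_, hcount _ ?_⟩
  · exact (Nat.one_lt_pow (by positivity) hw).trans_le hx
  · exact_mod_cast hM
  · exact one_sub_inv_mul_log_le_log_div (by positivity) (by positivity) hx (hpos m hm)
      (le_pow_of_mem_increasingProducts hm)
  · exact le_div_of_le_pow (by positivity) (by positivity) hx (hpos m hm)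
      (le_pow_of_mem_increasingProducts hm)

lemma sum_card_largestFactors_large_le (hS : ∀ i, ∀ p ∈ S i, p.Prime) (hw : 1 < w)
    (hwx : w ≤ x) (hB : 0 ≤ B) (hθ : 0 < θ) (hlog : θ * Real.log x ≤ Real.log w)
    (hcount : ∀ t : ℝ, w ≤ t → countUpTo (S k) t * Real.log t ≤ B * t) :
    ∑ m ∈ increasingProducts S k (x + 1) \ increasingProducts S k w,
        ((largestFactors S k x m).card : ℝ) ≤
      B / θ * (x / Real.log x) *
        (iteratedReciprocalSum S k (x + 1) - iteratedReciprocalSum S k w) := by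
  have hS0 : ∀ i, 0 ∉ S i := fun i h ↦ Nat.not_prime_zero (hS i 0 h)
  have hsub := increasingProducts_mono S k (hwx.trans x.le_succ)
  rw [← sum_inv_increasingProducts hS, ← sum_inv_increasingProducts hS,
    ← Finset.sum_sdiff_eq_sub hsub]
  have hpos : ∀ m ∈ increasingProducts S k (x + 1) \ increasingProducts S k w, 0 < m :=
    fun m hm ↦ pos_of_mem_increasingProducts hS0 (Finset.mem_sdiff.1 hm).1
  refine sum_card_largestFactors_le (hS0 k) (hw.trans_le hwx) hB hθ hpos fun m hm hne ↦ ?_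
  have hwm := le_div_of_notMem_increasingProducts (hpos m hm) (Finset.mem_sdiff.1 hm).2 hne
  exact ⟨hlog.trans (Real.log_le_log (by positivity) hwm), hcount _ hwm⟩

lemma eventually_countUpTo_mul_log_le {T : Set ℕ} {c : ℝ} (hT : HasPrimeDensity T c)
    (hB : c < B) : ∀ᶠ t in atTop, countUpTo T t * Real.log t ≤ B * t := by
  filter_upwards [hT.eventually (ge_mem_nhds hB), eventually_gt_atTop 0] with t ht ht0
  exact (div_le_iff₀ ht0).1 ht

lemma eventually_le_countUpTo_mul_log {T : Set ℕ} {b c : ℝ} (hT : HasPrimeDensity T c)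
    (hb : b < c) : ∀ᶠ t in atTop, b * t ≤ countUpTo T t * Real.log t := by
  filter_upwards [hT.eventually (le_mem_nhds hb), eventually_gt_atTop 0] with t ht ht0
  exact (le_div_iff₀ ht0).1 ht

lemma eventually_forall_floorRoot_le {L : ℕ} {p : ℝ → Prop} (hL : L ≠ 0)
    (hp : ∀ᶠ t in atTop, p t) :
    ∀ᶠ x in atTop, ∀ t : ℝ, floorRoot L x ≤ t → p t :=
  (tendsto_natCast_atTop_atTop.comp (tendsto_floorRoot_atTop hL)).eventually
    (eventually_forall_ge_atTop.2 hp)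

lemma eventually_productCount_succ_le (hS : ∀ i, ∀ p ∈ S i, p.Prime) {c : ℝ}
    (hc : HasPrimeDensity (S k) c) (hB : 0 ≤ B) (hcB : c < B) {L : ℕ} (hM : 1 < M)
    (hL : L = (k + 1) * M) :
    ∀ᶠ x : ℕ in atTop, (productCount S (k + 1) x : ℝ) ≤ x / Real.log x *
      (B / (1 - (M : ℝ)⁻¹) * iteratedReciprocalSum S k (floorRoot L x) + B * (2 * L) *
        (iteratedReciprocalSum S k (x + 1) - iteratedReciprocalSum S k (floorRoot L x))) := by
  have hL0 : L ≠ 0 := hL ▸ by positivity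
  filter_upwards [(tendsto_floorRoot_atTop hL0).eventually_gt_atTop 1,
    eventually_log_le_mul_log_floorRoot hL0,
    eventually_forall_floorRoot_le hL0 (eventually_countUpTo_mul_log_le hc hcB)]
    with x hw hlog hcount
  have hwx := floorRoot_le hL0 x
  have hpow : floorRoot L x ^ ((k + 1) * M) ≤ x := hL ▸ floorRoot_pow_le hL0 x
  rw [productCount_succ hS, Nat.cast_sum,
    ← Finset.sum_sdiff (increasingProducts_mono S k (hwx.trans x.le_succ))]
  have hlog' : (2 * L : ℝ)⁻¹ * Real.log x ≤ Real.log (floorRoot L x) :=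
    (inv_mul_le_iff₀ (by positivity)).2 hlog
  have hlarge := sum_card_largestFactors_large_le hS hw hwx hB (by positivity) hlog' hcount
  have hsmall := sum_card_largestFactors_small_le hS hM hw hpow hB hcount
  rw [div_inv_eq_mul] at hlarge
  linarith

lemma card_increasingProducts_mul_le_sqrt (hS : ∀ i, 0 ∉ S i) (hx : w ^ ((k + 1) * 2) ≤ x) :
    ((increasingProducts S k w).card : ℝ) * w ≤ √x := by
  have hcard : (increasingProducts S k w).card ≤ w ^ k :=
    calc _ ≤ (Finset.Icc 1 (w ^ k)).card := Finset.card_le_card fun m hm ↦ Finset.mem_Icc.2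
          ⟨pos_of_mem_increasingProducts hS hm, le_pow_of_mem_increasingProducts hm⟩
      _ = w ^ k := by rw [Nat.card_Icc, Nat.add_sub_cancel]
  have hsq : ((increasingProducts S k w).card * w) ^ 2 ≤ x :=
    calc _ ≤ (w ^ k * w) ^ 2 := by gcongr
      _ = w ^ ((k + 1) * 2) := by rw [← pow_succ, ← pow_mul]
      _ ≤ x := hx
  exact Real.le_sqrt_of_sq_le (mod_cast hsq)

lemma le_card_largestFactors {b : ℝ} (hx : 1 < x) (hm : 0 < m)
    (hmw : m ∈ increasingProducts S k w)
    (hcount : b * (x / m) ≤ countUpTo (S k) (x / m) * Real.log (x / m)) :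
    x / Real.log x * b * (m : ℝ)⁻¹ - w ≤ (largestFactors S k x m).card := by
  have hlogx : 0 < Real.log x := Real.log_pos (mod_cast hx)
  have hlog : Real.log (x / m) ≤ Real.log x :=
    Real.log_le_log (by positivity) (div_le_self (by positivity) (mod_cast hm))
  calc x / Real.log x * b * (m : ℝ)⁻¹ - w = b * (x / m) / Real.log x - w := by field_simp
    _ ≤ countUpTo (S k) (x / m) - w := sub_le_sub_right ((div_le_iff₀ hlogx).2
        (hcount.trans (mul_le_mul_of_nonneg_left hlog (countUpTo_nonneg _ _)))) _
    _ ≤ (largestFactors S k x m).card := countUpTo_sub_le_card_largestFactors hm hmw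

lemma eventually_le_productCount_succ (hS : ∀ i, ∀ p ∈ S i, p.Prime) {b c : ℝ}
    (hc : HasPrimeDensity (S k) c) (hbc : b < c) {L : ℕ} (hL : L = (k + 1) * 2) :
    ∀ᶠ x : ℕ in atTop, x / Real.log x * (b * iteratedReciprocalSum S k (floorRoot L x)) - √x ≤
      productCount S (k + 1) x := by
  have hL0 : L ≠ 0 := hL ▸ by positivity
  have hS0 : ∀ i, 0 ∉ S i := fun i h ↦ Nat.not_prime_zero (hS i 0 h)
  filter_upwards [(tendsto_floorRoot_atTop hL0).eventually_gt_atTop 1,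
    eventually_forall_floorRoot_le hL0 (eventually_le_countUpTo_mul_log hc hbc)]
    with x hw hcount
  have hwx := floorRoot_le hL0 x
  have hpow : floorRoot L x ^ ((k + 1) * 2) ≤ x := hL ▸ floorRoot_pow_le hL0 x
  have herror := card_increasingProducts_mul_le_sqrt hS0 hpow
  have hterm : ∀ m ∈ increasingProducts S k (floorRoot L x),
      x / Real.log x * b * (m : ℝ)⁻¹ - floorRoot L x ≤ (largestFactors S k x m).card :=
    fun m hm ↦ le_card_largestFactors (hw.trans_le hwx) (pos_of_mem_increasingProducts hS0 hm) hm
      (hcount _ (le_div_of_le_pow (by positivity) two_ne_zero hpow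
        (pos_of_mem_increasingProducts hS0 hm) (le_pow_of_mem_increasingProducts hm)))
  calc x / Real.log x * (b * iteratedReciprocalSum S k (floorRoot L x)) - √x
      ≤ ∑ m ∈ increasingProducts S k (floorRoot L x),
          (x / Real.log x * b * (m : ℝ)⁻¹ - floorRoot L x) := by
        rw [Finset.sum_sub_distrib, ← Finset.mul_sum, sum_inv_increasingProducts hS,
          Finset.sum_const, nsmul_eq_mul]
        linarith
    _ ≤ ∑ m ∈ increasingProducts S k (floorRoot L x), ((largestFactors S k x m).card : ℝ) :=
        Finset.sum_le_sum hterm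
    _ ≤ ∑ m ∈ increasingProducts S k (x + 1), ((largestFactors S k x m).card : ℝ) :=
        Finset.sum_le_sum_of_subset_of_nonneg
          (increasingProducts_mono S k (hwx.trans x.le_succ)) fun _ _ _ ↦ Nat.cast_nonneg _
    _ = productCount S (k + 1) x := by rw [productCount_succ hS, Nat.cast_sum]

end

section
variable {S : ℕ → Set ℕ} {c : ℕ → ℝ}

lemma sqrt_isLittleO_div_log : (fun t ↦ √t) =o[atTop] fun t ↦ t / Real.log t := by
  have hlog := (isBigO_refl (fun t ↦ √t / Real.log t) atTop).mul_isLittleO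
    (isLittleO_log_rpow_atTop (r := 1 / 2) (by norm_num))
  refine hlog.congr' ?_ ?_ <;> filter_upwards [eventually_gt_atTop 1] with t ht
  · have := Real.log_pos ht
    field_simp
  · rw [← Real.sqrt_eq_rpow, div_mul_eq_mul_div, Real.mul_self_sqrt (by linarith)]

lemma sqrt_isLittleO_mul_iteratedReciprocalSum (hS : ∀ i, HasPrimeDensity (S i) (c i))
    (hc : ∀ i, 0 < c i) (k : ℕ) : (fun x : ℕ ↦ √x) =o[atTop] fun x : ℕ ↦
      x / Real.log x * iteratedReciprocalSum S k (x + 1) := by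
  obtain ⟨n, hn⟩ := (eventually_iteratedReciprocalSum_pos hS hc k).exists
  have hbound : (fun _ : ℕ ↦ (1 : ℝ)) =O[atTop] fun x ↦ iteratedReciprocalSum S k (x + 1) := by
    refine .of_bound (iteratedReciprocalSum S k n)⁻¹ ?_
    filter_upwards [eventually_ge_atTop n] with x hx
    rw [norm_one, Real.norm_of_nonneg (iteratedReciprocalSum_nonneg S k _), le_inv_mul_iff₀ hn,
      mul_one]
    exact iteratedReciprocalSum_mono S k (hx.trans x.le_succ)
  simpa only [Function.comp_def, mul_one] using
    (sqrt_isLittleO_div_log.comp_tendsto tendsto_natCast_atTop_atTop).mul_isBigO hbound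

lemma eventually_div_log_mul_iteratedReciprocalSum_pos
    (hS : ∀ i, HasPrimeDensity (S i) (c i)) (hc : ∀ i, 0 < c i) (k : ℕ) :
    ∀ᶠ x : ℕ in atTop, 0 < x / Real.log x * iteratedReciprocalSum S k (x + 1) := by
  filter_upwards [eventually_gt_atTop 1, (tendsto_add_atTop_nat 1).eventually
    (eventually_iteratedReciprocalSum_pos hS hc k)] with x hx hE
  exact mul_pos (div_pos (by positivity) (Real.log_pos (mod_cast hx))) hE

theorem tendsto_productCount_succ_div (hprime : ∀ i, ∀ p ∈ S i, p.Prime)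
    (hS : ∀ i, HasPrimeDensity (S i) (c i)) (hc : ∀ i, 0 < c i) (k : ℕ) :
    Tendsto (fun x : ℕ ↦ productCount S (k + 1) x /
      (x / Real.log x * iteratedReciprocalSum S k (x + 1))) atTop (𝓝 (c k)) := by
  have hpos := eventually_div_log_mul_iteratedReciprocalSum_pos hS hc k
  refine tendsto_order.2 ⟨fun a ha ↦ ?_, fun a ha ↦ ?_⟩
  · obtain ⟨b, hab, hbc⟩ := exists_between ha
    have hroot := tendsto_iteratedReciprocalSum_floorRoot_div hS hc k (L := (k + 1) * 2)
      (by positivity)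
    have hlim := (hroot.const_mul b).sub
      (sqrt_isLittleO_mul_iteratedReciprocalSum hS hc k).tendsto_div_nhds_zero
    rw [mul_one, sub_zero] at hlim
    filter_upwards [hlim.eventually (lt_mem_nhds hab), hpos,
      eventually_le_productCount_succ hprime (hS k) hbc rfl] with x hx hx0 hle
    refine hx.trans_le ((le_div_iff₀ hx0).2 (le_of_eq_of_le ?_ hle))
    have := right_ne_zero_of_mul hx0.ne'
    rw [sub_mul, div_mul_cancel₀ _ hx0.ne']
    field_simp
  · obtain ⟨B, hcB, hBa⟩ := exists_between ha
    have hM : Tendsto (fun M : ℕ ↦ B / (1 - (M : ℝ)⁻¹)) atTop (𝓝 B) := by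
      simpa [Pi.div_def] using tendsto_const_nhds.div
        (tendsto_inv_atTop_nhds_zero_nat.const_sub (1 : ℝ)) (by norm_num)
    obtain ⟨M, hMa, hM1⟩ := ((hM.eventually (gt_mem_nhds hBa)).and (eventually_gt_atTop 1)).exists
    have hroot := tendsto_iteratedReciprocalSum_floorRoot_div hS hc k (L := (k + 1) * M)
      (by positivity)
    have hlim := (hroot.const_mul (B / (1 - (M : ℝ)⁻¹))).add
      ((hroot.const_sub 1).const_mul (B * (2 * ((k + 1) * M : ℕ))))
    rw [mul_one, sub_self, mul_zero, add_zero] at hlim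
    filter_upwards [hlim.eventually (gt_mem_nhds hMa), hpos, eventually_productCount_succ_le hprime
      (hS k) ((hc k).trans hcB).le hcB hM1 rfl] with x hx hx0 hle
    refine ((div_le_iff₀ hx0).2 (hle.trans_eq ?_)).trans_lt hx
    have := right_ne_zero_of_mul hx0.ne'
    generalize B / (1 - (M : ℝ)⁻¹) = B'
    field_simp

/-- When every `S i` is the set of all primes, this is Landau's theorem on `πₖ`. -/
theorem productCount_succ_isEquivalent (hprime : ∀ i, ∀ p ∈ S i, p.Prime)
    (hS : ∀ i, HasPrimeDensity (S i) (c i)) (hc : ∀ i, 0 < c i) (k : ℕ) :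
    (fun x ↦ (productCount S (k + 1) x : ℝ)) ~[atTop] fun x ↦ (∏ i ∈ Finset.range (k + 1), c i) *
      (x / Real.log x * Real.log (Real.log x) ^ k / k.factorial) := by
  have hpos := eventually_div_log_mul_iteratedReciprocalSum_pos hS hc k
  have hratio := ((isEquivalent_const_iff_tendsto (hc k).ne').2
    (tendsto_productCount_succ_div hprime hS hc k)).mul
    (.refl (u := fun x : ℕ ↦ x / Real.log x * iteratedReciprocalSum S k (x + 1)))
  have hsum := (IsEquivalent.refl (u := fun x : ℕ ↦ c k * (x / Real.log x))).mul
    (iteratedReciprocalSum_succ_isEquivalent hS hc k)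
  refine (hratio.congr_left ?_).trans <| (hsum.congr_left (.of_forall fun x ↦ ?_)).congr_right
    (.of_forall fun x ↦ ?_)
  · filter_upwards [hpos] with x hx using div_mul_cancel₀ _ hx.ne'
  · simp only [Pi.mul_apply, Function.const_apply, mul_assoc]
  · simp only [Pi.mul_apply, Finset.prod_range_succ]
    ring

end

/-! ### Squarefree numbers -/

section
variable {S : ℕ → Set ℕ} {k n y : ℕ}

lemma strictMono_snoc_iff {α : Type*} [Preorder α] {p : Fin k → α} {a : α} :
    StrictMono (Fin.snoc p a : Fin (k + 1) → α) ↔ StrictMono p ∧ ∀ i, p i < a := by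
  rw [← Fin.insertNth_last', Fin.strictMono_insertNth_iff]
  exact and_congr_right fun _ ↦ ⟨fun h i ↦ h.1 i i.castSucc_lt_last,
    fun h ↦ ⟨fun i _ ↦ h i, fun i hi ↦ absurd hi i.castSucc_lt_last.not_ge⟩⟩

lemma mem_increasingProducts_iff : n ∈ increasingProducts S k y ↔
    ∃ p : Fin k → ℕ, StrictMono p ∧ (∀ i : Fin k, p i ∈ S i) ∧ (∀ i, p i < y) ∧ n = ∏ i, p i := by
  induction k generalizing y n with
  | zero => simp [increasingProducts, Subsingleton.strictMono]
  | succ k ih =>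
    rw [mem_increasingProducts_succ]
    constructor
    · rintro ⟨q, hqy, hq, m, hm, rfl⟩
      obtain ⟨p, hp, hpS, hpq, rfl⟩ := ih.1 hm
      exact ⟨Fin.snoc p q, strictMono_snoc_iff.2 ⟨hp, hpq⟩,
        by simpa [Fin.forall_fin_succ'] using ⟨hpS, hq⟩,
        by simpa [Fin.forall_fin_succ'] using ⟨fun i ↦ (hpq i).trans hqy, hqy⟩,
        (Fin.prod_snoc q p).symm⟩
    · rintro ⟨p, hp, hpS, hpy, rfl⟩
      exact ⟨p (Fin.last k), hpy _, hpS (Fin.last k), ∏ i : Fin k, p i.castSucc,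
        ih.2 ⟨_, hp.comp Fin.strictMono_castSucc, fun i ↦ hpS i.castSucc,
          fun i ↦ hp i.castSucc_lt_last, rfl⟩, (Fin.prod_univ_castSucc p).symm⟩

lemma productCount_eq_card (hS : ∀ i, 0 ∉ S i) (k x : ℕ) :
    productCount S k x = {n ∈ Finset.range (x + 1) | ∃ p : Fin k → ℕ, StrictMono p ∧
      (∀ i : Fin k, p i ∈ S i) ∧ n = ∏ i, p i}.card := by
  refine congrArg Finset.card (Finset.ext fun n ↦ ?_)
  rw [Finset.mem_filter, Finset.mem_filter, Finset.mem_range_succ_iff, and_comm]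
  refine and_congr_right fun hnx ↦ ⟨fun hn ↦ ?_, ?_⟩
  · obtain ⟨p, hp, hpS, -, hprod⟩ := mem_increasingProducts_iff.1 hn
    exact ⟨p, hp, hpS, hprod⟩
  · rintro ⟨p, hp, hpS, rfl⟩
    have hpos : 0 < ∏ i, p i :=
      Finset.prod_pos fun i _ ↦ Nat.pos_of_ne_zero fun h ↦ hS i (h ▸ hpS i)
    exact mem_increasingProducts_iff.2 ⟨p, hp, hpS, fun i ↦ Nat.lt_succ_of_le <|
      (Nat.le_of_dvd hpos (Finset.dvd_prod_of_mem p (Finset.mem_univ i))).trans hnx, rfl⟩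

lemma squarefree_and_card_primeFactors_eq_iff : (Squarefree n ∧ n.primeFactors.card = k) ↔
    ∃ p : Fin k → ℕ, StrictMono p ∧ (∀ i, (p i).Prime) ∧ n = ∏ i, p i := by
  constructor
  · rintro ⟨hn, hcard⟩
    let p := n.primeFactors.orderEmbOfFin hcard
    refine ⟨p, p.strictMono,
      fun i ↦ Nat.prime_of_mem_primeFactors (Finset.orderEmbOfFin_mem _ hcard i), ?_⟩
    calc n = ∏ q ∈ n.primeFactors, q := (Nat.prod_primeFactors_of_squarefree hn).symm
      _ = ∏ q ∈ Finset.univ.image p, q := by rw [Finset.image_orderEmbOfFin_univ]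
      _ = ∏ i, p i := Finset.prod_image p.injective.injOn
  · rintro ⟨p, hp, hprime, rfl⟩
    refine ⟨Finset.squarefree_prod_of_pairwise_isCoprime (fun i _ j _ hij ↦ ?_)
      fun i _ ↦ (hprime i).prime.irreducible.squarefree, ?_⟩
    · exact Nat.coprime_iff_isRelPrime.1
        ((Nat.coprime_primes (hprime i) (hprime j)).2 (hp.injective.ne hij))
    · have hprod : ∏ i, p i = ∏ q ∈ Finset.univ.image p, q :=
        (Finset.prod_image (f := fun q ↦ q) hp.injective.injOn).symm
      rw [hprod, Nat.primeFactors_prod (by simpa using hprime),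
        Finset.card_image_of_injective _ hp.injective, Finset.card_fin]

lemma productCount_setOf_prime (k x : ℕ) :
    productCount (fun _ ↦ {p | p.Prime}) k x =
      {n ∈ Finset.range (x + 1) | Squarefree n ∧ n.primeFactors.card = k}.card := by
  rw [productCount_eq_card (S := fun _ ↦ {p | p.Prime}) fun _ ↦ Nat.not_prime_zero]
  simp only [mem_ofPred_eq, squarefree_and_card_primeFactors_eq_iff]

lemma productCount_isEquivalent_mul_card_squarefree {c : ℕ → ℝ}
    (hprime : ∀ i, ∀ p ∈ S i, p.Prime) (hS : ∀ i, HasPrimeDensity (S i) (c i))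
    (hc : ∀ i, 0 < c i) (k : ℕ) :
    (fun x ↦ (productCount S (k + 1) x : ℝ)) ~[atTop] fun x ↦ (∏ i ∈ Finset.range (k + 1), c i) *
      ({n ∈ Finset.range (x + 1) | Squarefree n ∧ n.primeFactors.card = k + 1}.card : ℝ) := by
  have hLandau := productCount_succ_isEquivalent (S := fun _ ↦ {p | p.Prime}) (fun _ _ hp ↦ hp)
    (fun _ ↦ hasPrimeDensity_setOf_prime) (fun _ ↦ one_pos) k
  simp only [Finset.prod_const_one, one_mul, productCount_setOf_prime] at hLandau
  exact (productCount_succ_isEquivalent hprime hS hc k).trans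
    (IsEquivalent.refl.mul hLandau).symm

end

end

theorem stmt_13 (D : ℤ) (hD : ¬ IsSquare D) (k : ℕ) (hk : 1 ≤ k)
    (ε : Fin k → ℤ) (hε : ∀ i, ε i = 1 ∨ ε i = -1) :
    IsEquivalent atTop
      (fun x : ℕ => (((Finset.range (x + 1)).filter
          (fun n => ∃ p : Fin k → ℕ, StrictMono p ∧ (∀ i, (p i).Prime) ∧
            n = ∏ i, p i ∧ ∀ i, jacobiSym D (p i) = ε i)).card : ℝ))
      (fun x : ℕ => (1 / 2 ^ k) * (((Finset.range (x + 1)).filter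
          (fun n => Squarefree n ∧ n.primeFactors.card = k)).card : ℝ)) := by
  obtain ⟨k, rfl⟩ := Nat.exists_eq_add_of_le' hk
  obtain ⟨e, he, heε⟩ :
      ∃ e : ℕ → ℤ, (∀ i, e i = 1 ∨ e i = -1) ∧ ∀ i : Fin (k + 1), e i = ε i :=
    ⟨fun i ↦ ε (Fin.ofNat (k + 1) i), fun i ↦ hε _, fun i ↦ congrArg ε (Fin.ofNat_val_eq_self i)⟩
  let S (i : ℕ) : Set ℕ := {p | p.Prime ∧ jacobiSym D p = e i}
  have hcount := productCount_isEquivalent_mul_card_squarefree (S := S) (fun _ _ hp ↦ hp.1)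
    (fun i ↦ hasPrimeDensity_jacobiSym_eq hD (he i)) (fun _ ↦ one_half_pos) k
  have hS0 (i : ℕ) : 0 ∉ S i := fun h ↦ Nat.not_prime_zero h.1
  simp only [productCount_eq_card hS0, S, Set.mem_ofPred_eq, heε, forall_and, Finset.prod_const,
    Finset.card_range, one_div_pow] at hcount
  simpa only [and_assoc, and_comm, and_left_comm] using hcount
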